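/- arXiv:1707.06345 — 7 statements merged into one kernel-verified Lean document; each statement's English description precedes it below -/
import Mathlib

section
/- Let α ∈ [0,1) be irrational, let h : 𝕋¹ → ℝ be a C^∞ function, and let T : 𝕋² → 𝕋² be the skew product T(x,y) = (x+α, y+h(x) mod 1) on 𝕋² = (ℝ/ℤ)². Then for every T-invariant Borel probability measure ρ on 𝕋², the measure complexity of (𝕋²,T,ρ) is sub-polynomial. -/
open MeasureTheory Filter

/-- The Bowen-type averaged metric `d̄_n(x,y) = (1/n) ∑_{i=0}^{n-1} d(Tⁱx, Tⁱy)`. -/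
noncomputable def dbar {X : Type*} [PseudoMetricSpace X] (T : X → X) (n : ℕ) (x y : X) : ℝ :=
  (∑ i ∈ Finset.range n, dist (T^[i] x) (T^[i] y)) / n

/-- The measure complexity function `S_n(d,ρ,ε)`. -/
noncomputable def measureComplexity {X : Type*} [PseudoMetricSpace X] [MeasurableSpace X]
    (T : X → X) (ρ : Measure X) (n : ℕ) (ε : ℝ) : ℕ :=
  sInf {m : ℕ | ∃ xs : Fin m → X,
    1 - ε < (ρ (⋃ i, {y | dbar T n (xs i) y < ε})).toReal}

/-- The measure complexity of `(X,T,ρ)` is sub-polynomial. -/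
def SubPolynomialComplexity {X : Type*} [PseudoMetricSpace X] [MeasurableSpace X]
    (T : X → X) (ρ : Measure X) : Prop :=
  ∀ τ > (0 : ℝ), ∀ ε > (0 : ℝ),
    Filter.atTop.liminf (fun n : ℕ => (measureComplexity T ρ n ε : ℝ) / (n : ℝ) ^ τ) = 0

lemma aux_decay (K : ℕ) : ∀ f : ℝ → ℂ, ContDiff ℝ ((⊤ : ℕ∞) : WithTop ℕ∞) f →
    (∀ t, f (t + 1) = f t) →
    ∃ C : ℝ, 0 ≤ C ∧ ∀ n : ℤ, n ≠ 0 →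
      ‖fourierCoeffOn (lt_add_of_pos_right (0 : ℝ) one_pos) f n‖ * |(n : ℝ)| ^ K ≤ C := by
  induction K with
  | zero =>
    intro f hf hper
    obtain ⟨C, hC⟩ := isCompact_Icc.exists_bound_of_continuousOn
      (hf.continuous.continuousOn (s := Set.Icc (0 : ℝ) 1))
    refine ⟨C, (norm_nonneg _).trans (hC 0 (by simp)), fun n hn => ?_⟩
    rw [fourierCoeffOn_eq_integral]
    simp only [zero_add, sub_zero, div_one, one_smul, pow_zero, mul_one]
    have := intervalIntegral.norm_integral_le_of_norm_le_const (a := (0 : ℝ)) (b := 1) (C := C)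
      (f := fun x : ℝ => (fourier (-n) (x : AddCircle ((0 : ℝ) + 1 - 0)) : ℂ) • f x) ?_
    · simpa using this
    · intro x hx
      rw [Set.uIoc_of_le zero_le_one] at hx
      rw [norm_smul, fourier_apply, Circle.norm_coe, one_mul]
      exact hC x ⟨hx.1.le, hx.2⟩
  | succ K ih =>
    intro f hf hper
    have hf' := contDiff_infty_iff_deriv.1 hf
    have hper' : ∀ t, deriv f (t + 1) = deriv f t := by
      intro t
      have : (fun t => f (t + 1)) = f := funext hper
      rw [← deriv_comp_add_const, this]
    obtain ⟨C, hC0, hC⟩ := ih (deriv f) hf'.2 hper'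
    refine ⟨C, hC0, fun n hn => ?_⟩
    rw [fourierCoeffOn_of_hasDerivAt _ hn (fun x _ => (hf'.1 x).hasDerivAt)
      (hf'.2.continuous.intervalIntegrable _ _)]
    have h1 := hC n hn
    have e : f (0 + 1) - f 0 = 0 := by rw [hper 0, sub_self]
    rw [e, mul_zero, zero_sub]
    have hn' : 0 < |(n : ℝ)| := abs_pos.2 (by exact_mod_cast hn)
    simp only [norm_mul, norm_div, norm_neg, norm_one, Complex.norm_I, Complex.norm_real,
      Complex.norm_intCast, Complex.norm_ofNat, Real.norm_eq_abs, abs_of_pos Real.pi_pos]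
    have e2 : ‖(((0 + 1 : ℝ) : ℂ) - ((0 : ℝ) : ℂ))‖ = 1 := by simp
    rw [e2, one_mul, pow_succ]
    set A := ‖fourierCoeffOn (lt_add_of_pos_right (0 : ℝ) one_pos) (deriv f) n‖
    have h2 : 1 / (2 * Real.pi * 1 * |(n : ℝ)|) * A * (|(n : ℝ)| ^ K * |(n : ℝ)|)
        = (A * |(n : ℝ)| ^ K) * (1 / (2 * Real.pi)) := by
      field_simp
    rw [h2]
    have h3 : 1 / (2 * Real.pi) ≤ 1 := by
      rw [div_le_one (by positivity)]; linarith [Real.pi_gt_three]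
    have h4 : 0 ≤ A * |(n : ℝ)| ^ K := by positivity
    nlinarith

lemma aux_fourier_add (m : ℤ) (x y : AddCircle (1 : ℝ)) :
    (fourier m (x + y) : ℂ) = fourier m x * fourier m y := by
  simp [fourier_apply, smul_add, AddCircle.toCircle_add]

lemma aux_fourier_norm (m : ℤ) (x : AddCircle (1 : ℝ)) : ‖(fourier m x : ℂ)‖ = 1 := by
  rw [fourier_apply, Circle.norm_coe]

lemma aux_fourier_real (m : ℤ) (t : ℝ) :
    (fourier m (t : AddCircle (1 : ℝ)) : ℂ) =
      Complex.exp (Complex.I * ((2 * Real.pi * (m * t) : ℝ) : ℂ)) := by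
  rw [fourier_coe_apply]; congr 1; push_cast; ring

lemma aux_rep (x : AddCircle (1 : ℝ)) : ∃ t : ℝ, (t : AddCircle (1 : ℝ)) = x ∧ |t| = ‖x‖ := by
  induction x using QuotientAddGroup.induction_on with
  | H a =>
    refine ⟨a - round a, ?_, (UnitAddCircle.norm_eq).symm⟩
    have : (((round a : ℤ) : ℝ) : AddCircle (1 : ℝ)) = 0 := by
      rw [AddCircle.coe_eq_zero_iff]; exact ⟨round a, by simp⟩
    rw [AddCircle.coe_sub, this, sub_zero]

lemma aux_fourier_lip (m : ℤ) (x y : AddCircle (1 : ℝ)) :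
    ‖(fourier m x : ℂ) - fourier m y‖ ≤ 2 * Real.pi * |(m : ℝ)| * ‖x - y‖ := by
  have h1 : (fourier m x : ℂ) - fourier m y = fourier m y * (fourier m (x - y) - 1) := by
    rw [mul_sub, ← aux_fourier_add, mul_one]; simp
  rw [h1, norm_mul, aux_fourier_norm, one_mul]
  obtain ⟨t, ht, htn⟩ := aux_rep (x - y)
  rw [← ht, aux_fourier_real, ht, ← htn]
  refine Real.norm_exp_I_mul_ofReal_sub_one_le.trans (le_of_eq ?_)
  rw [Real.norm_eq_abs, abs_mul, abs_mul, abs_mul, abs_of_pos Real.pi_pos, abs_two]; ring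

lemma aux_lower (m : ℤ) (t : ℝ) :
    4 * |(m * t) - round (m * t)| ≤ ‖(fourier m (t : AddCircle (1 : ℝ)) : ℂ) - 1‖ := by
  set s := (m * t) - round (m * t) with hs
  have e : (fourier m (t : AddCircle (1 : ℝ)) : ℂ)
      = Complex.exp (Complex.I * ((2 * Real.pi * s : ℝ) : ℂ)) := by
    rw [aux_fourier_real]
    rw [Complex.exp_eq_exp_iff_exists_int]
    refine ⟨round (m * t), ?_⟩
    rw [hs]; push_cast; ring
  rw [e, Complex.norm_exp_I_mul_ofReal_sub_one]
  have hs2 : |s| ≤ 1 / 2 := abs_sub_round _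
  have h := Real.mul_abs_le_abs_sin (x := Real.pi * s) (by
    rw [abs_mul, abs_of_pos Real.pi_pos]; nlinarith [Real.pi_pos])
  rw [abs_mul, abs_of_pos Real.pi_pos] at h
  have e2 : 2 / Real.pi * (Real.pi * |s|) = 2 * |s| := by field_simp
  rw [e2] at h
  have e3 : 2 * Real.pi * s / 2 = Real.pi * s := by ring
  rw [e3, norm_mul, Real.norm_eq_abs, Real.norm_eq_abs, abs_two]
  linarith

lemma aux_dioph (α : ℝ) (r : ℚ) (hr : |α - r| < 1 / (r.den : ℝ) ^ 2) (m : ℤ) (hm : m ≠ 0)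
    (hmq : 2 * |(m : ℝ)| ≤ r.den) (k : ℤ) : 1 / (2 * (r.den : ℝ)) ≤ |m * α - k| := by
  have hq : (0 : ℝ) < r.den := by exact_mod_cast r.pos
  have hr' : (r : ℝ) = r.num / r.den := by exact_mod_cast (Rat.num_div_den r).symm
  have hne : m * r.num - k * r.den ≠ 0 := by
    intro h0
    have hdvd : (r.den : ℤ) ∣ m * r.num := ⟨k, by linarith⟩
    have hcop : IsCoprime (r.den : ℤ) r.num := by
      rw [Int.isCoprime_iff_nat_coprime]; simpa using r.reduced.symm
    have h1 := hcop.dvd_of_dvd_mul_right hdvd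
    have h2 := Int.le_of_dvd (abs_pos.2 hm) ((dvd_abs _ _).2 h1)
    have h3 : (r.den : ℝ) ≤ |(m : ℝ)| := by exact_mod_cast h2
    linarith
  have h1 : (1 : ℝ) ≤ |(m * r.num - k * r.den : ℝ)| := by
    exact_mod_cast Int.one_le_abs hne
  have e : m * α - k = (m * r.num - k * r.den : ℝ) / r.den + m * (α - r) := by
    rw [hr']; field_simp; ring
  have h2 : |(m : ℝ) * (α - r)| ≤ 1 / (2 * r.den) := by
    rw [abs_mul]
    calc |(m : ℝ)| * |α - r| ≤ (r.den / 2) * (1 / (r.den : ℝ) ^ 2) := by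
          gcongr
          linarith
      _ = _ := by field_simp
  have h3 : 1 / (r.den : ℝ) ≤ |(m * r.num - k * r.den : ℝ) / r.den| := by
    rw [abs_div, abs_of_pos hq]; gcongr
  have h4 := abs_sub_abs_le_abs_sub ((m * r.num - k * r.den : ℝ) / r.den) (-(m * (α - r)))
  rw [abs_neg, sub_neg_eq_add, ← e] at h4
  have e5 : 1 / (r.den : ℝ) = 1 / (2 * r.den) + 1 / (2 * r.den) := by field_simp; ring
  linarith

lemma aux_den (α : ℝ) (hα : Irrational α) (B : ℕ) :
    ∃ r : ℚ, |α - r| < 1 / (r.den : ℝ) ^ 2 ∧ B < r.den := by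
  by_contra! hcon
  refine Real.infinite_rat_abs_sub_lt_one_div_den_sq_of_irrational hα ?_
  set N : ℤ := ⌈(|α| + 1) * B⌉
  refine Set.Finite.of_finite_image (f := fun r : ℚ => (r.num, r.den))
    (((Set.finite_Icc (-N) N).prod (Set.finite_Iic B)).subset ?_) ?_
  · rintro _ ⟨r, hr, rfl⟩
    have hb := hcon r hr
    have hq : (0 : ℝ) < r.den := by exact_mod_cast r.pos
    have hq1 : (1 : ℝ) ≤ r.den := by exact_mod_cast r.pos
    have hr' : (r.num : ℝ) = r * r.den := by exact_mod_cast (Rat.mul_den_eq_num r).symm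
    have h1 : |α - r| < 1 := lt_of_lt_of_le hr (by
      rw [div_le_one (by positivity)]; exact one_le_pow₀ hq1)
    have h2 : |(r : ℝ)| ≤ |α| + 1 := by
      have := abs_sub_abs_le_abs_sub (r : ℝ) α
      rw [abs_sub_comm] at this; linarith
    have h3 : |(r.num : ℝ)| ≤ N := by
      rw [hr', abs_mul, abs_of_pos hq]
      refine le_trans ?_ (Int.le_ceil _)
      gcongr
    have h4 : |r.num| ≤ N := by exact_mod_cast h3
    exact ⟨⟨(abs_le.1 h4).1, (abs_le.1 h4).2⟩, hb⟩
  · intro r _ s _ h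
    simp only [Prod.mk.injEq] at h
    exact Rat.ext h.1 h.2

lemma aux_geom (α : ℝ) (m : ℤ) (i : ℕ) (q : ℝ) (hq : 0 < q)
    (h : 1 / (2 * q) ≤ |m * α - round (m * α)|) :
    ‖∑ j ∈ Finset.range i, (fourier m ((j : ℕ) • (α : AddCircle (1 : ℝ))) : ℂ)‖ ≤ q := by
  set z : ℂ := fourier m (α : AddCircle (1 : ℝ)) with hz
  have e : ∀ j : ℕ, (fourier m ((j : ℕ) • (α : AddCircle (1 : ℝ))) : ℂ) = z ^ j := by
    intro j
    induction j with
    | zero => simp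
    | succ j ih => rw [succ_nsmul, aux_fourier_add, ih, pow_succ]
  simp_rw [e]
  have h1 := congrArg norm (geom_sum_mul z i)
  rw [norm_mul] at h1
  have h2 : ‖z ^ i - 1‖ ≤ 2 := by
    refine (norm_sub_le _ _).trans ?_
    rw [norm_pow, hz, aux_fourier_norm]; norm_num
  have h3 : 2 / q ≤ ‖z - 1‖ := by
    refine le_trans ?_ (aux_lower m α)
    calc 2 / q = 4 * (1 / (2 * q)) := by field_simp; norm_num
      _ ≤ _ := by gcongr
  have h4 : ‖∑ j ∈ Finset.range i, z ^ j‖ * (2 / q) ≤ 2 := by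
    rw [← h1] at h2
    exact le_trans (by gcongr) h2
  rw [mul_div_assoc', div_le_iff₀ hq] at h4
  linarith

lemma aux_birkhoff (α : ℝ) (h : AddCircle (1 : ℝ) → ℝ)
    (hsmooth : ContDiff ℝ ((⊤ : ℕ∞) : WithTop ℕ∞) (fun t : ℝ => h ((t : AddCircle (1 : ℝ)))))
    (K : ℕ) : ∃ A B : ℝ, 0 ≤ A ∧ 0 ≤ B ∧ ∀ r : ℚ, |α - r| < 1 / (r.den : ℝ) ^ 2 →
      ∀ n i : ℕ, i ≤ n → ∀ x y : AddCircle (1 : ℝ),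
      |∑ j ∈ Finset.range i, h (x + j • (α : AddCircle (1 : ℝ)))
        - ∑ j ∈ Finset.range i, h (y + j • (α : AddCircle (1 : ℝ)))|
        ≤ A * r.den * ‖x - y‖ + B * n / (r.den : ℝ) ^ K := by
  set f : ℝ → ℂ := fun t => ((h (t : AddCircle (1 : ℝ)) : ℝ) : ℂ) with hf
  have hfs : ContDiff ℝ ((⊤ : ℕ∞) : WithTop ℕ∞) f :=
    Complex.ofRealCLM.contDiff.comp hsmooth
  have hper : ∀ t, f (t + 1) = f t := by
    intro t; simp only [hf]; rw [AddCircle.coe_add_period]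
  have hcont : Continuous h := by
    have hq : Topology.IsQuotientMap (QuotientAddGroup.mk : ℝ → AddCircle (1 : ℝ)) :=
      isQuotientMap_quotient_mk'
    exact hq.continuous_iff.2 hsmooth.continuous
  let H : C(AddCircle (1 : ℝ), ℂ) := ⟨fun x => (h x : ℂ), by fun_prop⟩
  have hcoef : ∀ m, fourierCoeff H m = fourierCoeffOn (lt_add_of_pos_right (0 : ℝ) one_pos) f m := by
    intro m
    rw [← fourierCoeff_liftIco_eq (T := (1 : ℝ))]
    congr 1
    funext x
    obtain ⟨t, ht, rfl⟩ := AddCircle.coe_image_Ico_eq (1 : ℝ) 0 ▸ Set.mem_univ x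
    rw [AddCircle.liftIco_coe_apply ht]
    rfl
  obtain ⟨C3, hC30, hC3⟩ := aux_decay 3 f hfs hper
  obtain ⟨CK, hCK0, hCK⟩ := aux_decay (K + 2) f hfs hper
  obtain ⟨C2, hC20, hC2⟩ := aux_decay 2 f hfs hper
  simp_rw [← hcoef] at hC3 hCK hC2
  have hZ : Summable (fun m : ℤ => 1 / (m : ℝ) ^ 2) := Real.summable_one_div_int_pow.2 (by norm_num)
  set Z := ∑' m : ℤ, 1 / (m : ℝ) ^ 2 with hZdef
  have hZ0 : 0 ≤ Z := tsum_nonneg (fun m => by positivity)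
  have hsum : Summable (fourierCoeff H) := by
    refine Summable.of_norm_bounded_eventually (hZ.mul_left C2) ?_
    filter_upwards [(Set.finite_singleton (0 : ℤ)).compl_mem_cofinite] with m hm
    have hm0 : m ≠ 0 := hm
    have hm1 : (0 : ℝ) < (m : ℝ) ^ 2 := by positivity
    have := hC2 m hm0
    rw [sq_abs] at this
    rw [mul_one_div, le_div_iff₀ hm1]; exact this
  have hpt := has_pointwise_sum_fourier_series_of_summable hsum
  refine ⟨2 * Real.pi * C3 * Z, 2 * 2 ^ K * CK * Z, by positivity, by positivity, ?_⟩
  intro r hr n i hin x y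
  have hq : (0 : ℝ) < r.den := by exact_mod_cast r.pos
  set a : AddCircle (1 : ℝ) := (α : AddCircle (1 : ℝ)) with ha
  have hS : HasSum (fun m : ℤ => fourierCoeff H m *
      ((∑ j ∈ Finset.range i, (fourier m (j • a) : ℂ)) * (fourier m x - fourier m y)))
      (∑ j ∈ Finset.range i, H (x + j • a) - ∑ j ∈ Finset.range i, H (y + j • a)) := by
    have h1 := (hasSum_sum (s := Finset.range i) (fun j _ => hpt (x + j • a))).sub
      (hasSum_sum (s := Finset.range i) (fun j _ => hpt (y + j • a)))
    refine h1.congr_fun ?_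
    intro m
    simp only [smul_eq_mul, aux_fourier_add, ← Finset.mul_sum]
    ring
  have e : ((∑ j ∈ Finset.range i, h (x + j • a) - ∑ j ∈ Finset.range i, h (y + j • a) : ℝ) : ℂ)
      = ∑ j ∈ Finset.range i, H (x + j • a) - ∑ j ∈ Finset.range i, H (y + j • a) := by
    push_cast; rfl
  rw [← Real.norm_eq_abs, ← Complex.norm_real, e, ← hS.tsum_eq]
  set D := 2 * Real.pi * C3 * r.den * ‖x - y‖ + 2 * 2 ^ K * CK * n / (r.den : ℝ) ^ K with hD
  have hbound := tsum_of_norm_bounded (hZ.hasSum.mul_left D) (f := fun m : ℤ => fourierCoeff H m *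
      ((∑ j ∈ Finset.range i, (fourier m (j • a) : ℂ)) * (fourier m x - fourier m y))) ?_
  · refine hbound.trans (le_of_eq ?_)
    rw [hD, ← hZdef]; ring
  intro m
  have hD1 : 0 ≤ 2 * Real.pi * C3 * r.den * ‖x - y‖ := by positivity
  have hD2 : 0 ≤ 2 * 2 ^ K * CK * n / (r.den : ℝ) ^ K := by positivity
  rcases eq_or_ne m 0 with rfl | hm
  · simp
  have hm1 : (0 : ℝ) < |(m : ℝ)| := abs_pos.2 (by exact_mod_cast hm)
  rw [norm_mul, norm_mul, mul_one_div, ← sq_abs (m : ℝ), le_div_iff₀ (by positivity)]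
  by_cases hmq : 2 * |(m : ℝ)| ≤ r.den
  · have g1 := aux_geom α m i r.den hq (aux_dioph α r hr m hm hmq _)
    have g2 := aux_fourier_lip m x y
    have g3 := hC3 m hm
    calc _ ≤ ‖fourierCoeff H m‖ * (r.den * (2 * Real.pi * |(m : ℝ)| * ‖x - y‖)) * |(m : ℝ)| ^ 2 := by
          gcongr
      _ = (‖fourierCoeff H m‖ * |(m : ℝ)| ^ 3) * (2 * Real.pi * r.den * ‖x - y‖) := by ring
      _ ≤ C3 * (2 * Real.pi * r.den * ‖x - y‖) := by gcongr
      _ ≤ D := by rw [hD]; linarith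
  · push Not at hmq
    have g1 : ‖∑ j ∈ Finset.range i, (fourier m (j • a) : ℂ)‖ ≤ n := by
      refine (norm_sum_le _ _).trans ?_
      simp only [aux_fourier_norm, Finset.sum_const, Finset.card_range, nsmul_eq_mul, mul_one]
      exact_mod_cast hin
    have g2 : ‖(fourier m x : ℂ) - fourier m y‖ ≤ 2 := by
      refine (norm_sub_le _ _).trans ?_
      rw [aux_fourier_norm, aux_fourier_norm]; norm_num
    have g3 := hCK m hm
    have g4 : 1 ≤ (2 * |(m : ℝ)|) ^ K / (r.den : ℝ) ^ K := by
      rw [le_div_iff₀ (by positivity), one_mul]; gcongr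
    calc _ ≤ ‖fourierCoeff H m‖ * (n * 2) * |(m : ℝ)| ^ 2 := by
          gcongr
      _ ≤ ‖fourierCoeff H m‖ * (n * 2) * |(m : ℝ)| ^ 2 * ((2 * |(m : ℝ)|) ^ K / (r.den : ℝ) ^ K) :=
          le_mul_of_one_le_right (by positivity) g4
      _ = (‖fourierCoeff H m‖ * |(m : ℝ)| ^ (K + 2)) * (2 * 2 ^ K * n / (r.den : ℝ) ^ K) := by
          rw [mul_pow, pow_add]; ring
      _ ≤ CK * (2 * 2 ^ K * n / (r.den : ℝ) ^ K) := by gcongr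
      _ = 2 * 2 ^ K * CK * n / (r.den : ℝ) ^ K := by ring
      _ ≤ D := by rw [hD]; linarith

lemma aux_norm_le (t : ℝ) : ‖(t : AddCircle (1 : ℝ))‖ ≤ |t| := by
  have h := round_le t 0
  rw [Int.cast_zero, sub_zero] at h
  exact (UnitAddCircle.norm_eq (x := t)).le.trans h

lemma aux_grid (N : ℕ) (hN : 0 < N) (x : AddCircle (1 : ℝ)) :
    ∃ j : Fin N, ‖((((j : ℕ) : ℝ) / N : ℝ) : AddCircle (1 : ℝ)) - x‖ ≤ 1 / N := by
  have hN' : (0 : ℝ) < N := by exact_mod_cast hN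
  obtain ⟨t, ht, rfl⟩ := AddCircle.coe_image_Ico_eq (1 : ℝ) 0 ▸ Set.mem_univ x
  have ht0 : 0 ≤ t * N := mul_nonneg ht.1 hN'.le
  have h1 := Nat.floor_le ht0
  have h2 := Nat.lt_floor_add_one (t * N)
  have ht1 : t < 1 := by simpa using ht.2
  refine ⟨⟨⌊t * N⌋₊, ?_⟩, ?_⟩
  · rw [Nat.floor_lt ht0]; nlinarith
  · rw [← AddCircle.coe_sub]
    refine (le_trans ?_ (?_ : |(⌊t * N⌋₊ : ℝ) / N - t| ≤ 1 / N))
    · exact aux_norm_le _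
    · rw [abs_sub_comm, abs_of_nonneg]
      · rw [sub_le_iff_le_add, ← add_div, le_div_iff₀ hN']; linarith
      · rw [sub_nonneg, div_le_iff₀ hN']; exact h1

lemma aux_iter (α : ℝ) (h : AddCircle (1 : ℝ) → ℝ)
    (T : AddCircle (1 : ℝ) × AddCircle (1 : ℝ) → AddCircle (1 : ℝ) × AddCircle (1 : ℝ))
    (hT : ∀ p, T p = (p.1 + (α : AddCircle (1 : ℝ)), p.2 + ((h p.1 : ℝ) : AddCircle (1 : ℝ))))
    (i : ℕ) (p : AddCircle (1 : ℝ) × AddCircle (1 : ℝ)) :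
    T^[i] p = (p.1 + i • (α : AddCircle (1 : ℝ)),
      p.2 + ((∑ j ∈ Finset.range i, h (p.1 + j • (α : AddCircle (1 : ℝ))) : ℝ) :
        AddCircle (1 : ℝ))) := by
  induction i with
  | zero => simp
  | succ i ih =>
    rw [Function.iterate_succ_apply', ih, hT, Finset.sum_range_succ, AddCircle.coe_add, succ_nsmul]
    simp only [add_assoc]

/-- For the skew product `T(x,y) = (x+α, y+h(x) mod 1)` on `𝕋²` over an irrational rotation,
with `h : 𝕋¹ → ℝ` a `C^∞` (homotopically trivial) function, every `T`-invariant Borel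
probability measure has sub-polynomial measure complexity. -/
theorem subPolynomial_complexity_of_smooth_skew_product
    (α : ℝ) (hα : Irrational α) (hα01 : α ∈ Set.Ico (0 : ℝ) 1)
    (h : AddCircle (1 : ℝ) → ℝ)
    (hsmooth : ContDiff ℝ ((⊤ : ℕ∞) : WithTop ℕ∞) (fun t : ℝ => h ((t : AddCircle (1 : ℝ)))))
    (T : AddCircle (1 : ℝ) × AddCircle (1 : ℝ) → AddCircle (1 : ℝ) × AddCircle (1 : ℝ))
    (hT : ∀ p, T p = (p.1 + (α : AddCircle (1 : ℝ)), p.2 + ((h p.1 : ℝ) : AddCircle (1 : ℝ))))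
    (ρ : Measure (AddCircle (1 : ℝ) × AddCircle (1 : ℝ)))
    (hρprob : IsProbabilityMeasure ρ) (hρinv : MeasurePreserving T ρ ρ) :
    SubPolynomialComplexity T ρ := by
  intro τ hτ ε hε
  have key : ∀ δ > (0 : ℝ), ∀ n₀ : ℕ, ∃ n ≥ n₀,
      (measureComplexity T ρ n ε : ℝ) / (n : ℝ) ^ τ ≤ δ := by
    intro δ hδ n₀
    obtain ⟨L, hL⟩ := exists_nat_gt (3 / τ)
    have hLτ : 3 ≤ (L : ℝ) * τ := by
      rw [div_lt_iff₀ hτ] at hL; exact hL.le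
    have hL1 : 1 ≤ L := by
      have : (0 : ℝ) < L := lt_trans (by positivity) hL
      exact_mod_cast this
    obtain ⟨A, B, hA, hB, hAB⟩ := aux_birkhoff α h hsmooth (L + 1)
    obtain ⟨M, hM⟩ := exists_nat_gt (2 * (A + 2) / ε)
    have hM0 : (0 : ℝ) < M := lt_trans (by positivity) hM
    have hMn : 0 < M := by exact_mod_cast hM0
    obtain ⟨q₀, hq₀⟩ := exists_nat_gt (max (2 * B / ε) ((M : ℝ) ^ 2 / δ))
    obtain ⟨r, hr, hrq⟩ := aux_den α hα (max n₀ q₀)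
    set q := r.den with hqdef
    have hqn : 0 < q := r.pos
    have hq : (0 : ℝ) < q := by exact_mod_cast hqn
    have hq1 : (1 : ℝ) ≤ q := by exact_mod_cast hqn
    have hqq : max (2 * B / ε) ((M : ℝ) ^ 2 / δ) < q :=
      hq₀.trans (by exact_mod_cast (le_max_right _ _).trans_lt hrq)
    have hqB : 2 * B / ε < q := (le_max_left _ _).trans_lt hqq
    have hqM : (M : ℝ) ^ 2 / δ < q := (le_max_right _ _).trans_lt hqq
    have hn₀ : n₀ ≤ q := ((le_max_left _ _).trans_lt hrq).le
    refine ⟨q ^ L, hn₀.trans (Nat.le_self_pow (by omega) q), ?_⟩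
    set N := q * M with hN
    have hN0 : 0 < N := Nat.mul_pos hqn hMn
    have hNr : (N : ℝ) = q * M := by rw [hN]; push_cast; rfl
    have hNpos : (0 : ℝ) < N := by exact_mod_cast hN0
    have hcomp : measureComplexity T ρ (q ^ L) ε ≤ N * N := by
      refine Nat.sInf_le ?_
      let g : ℕ → AddCircle (1 : ℝ) := fun j => (((j : ℝ) / N : ℝ) : AddCircle (1 : ℝ))
      refine ⟨fun i => (g (finProdFinEquiv.symm i).1, g (finProdFinEquiv.symm i).2), ?_⟩
      have huniv : (⋃ i : Fin (N * N), {y | dbar T (q ^ L)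
          (g (finProdFinEquiv.symm i).1, g (finProdFinEquiv.symm i).2) y < ε}) = Set.univ := by
        refine Set.eq_univ_of_forall fun p => ?_
        obtain ⟨j, hj⟩ := aux_grid N hN0 p.1
        obtain ⟨k, hk⟩ := aux_grid N hN0 p.2
        refine Set.mem_iUnion.2 ⟨finProdFinEquiv (j, k), ?_⟩
        simp only [Equiv.symm_apply_apply, Set.mem_ofPred_eq]
        set p' : AddCircle (1 : ℝ) × AddCircle (1 : ℝ) := (g j, g k) with hp'
        have hj' : ‖p'.1 - p.1‖ ≤ 1 / N := hj
        have hk' : ‖p'.2 - p.2‖ ≤ 1 / N := hk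
        have hqLpos : (0 : ℝ) < ((q ^ L : ℕ) : ℝ) := by positivity
        have hb1 : 1 / (N : ℝ) + (A * q * (1 / N) + B / q) < ε := by
          have i1 : 1 / (N : ℝ) ≤ 1 / M := by
            rw [hNr]; gcongr; nlinarith
          have i2 : A * q * (1 / N) = A / M := by rw [hNr]; field_simp
          have i3 : B / q < ε / 2 := by
            rw [div_lt_iff₀ hε] at hqB
            rw [div_lt_iff₀ hq]; linarith
          have i4 : (A + 2) / M < ε / 2 := by
            rw [div_lt_iff₀ hε] at hM
            rw [div_lt_iff₀ hM0]; linarith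
          have i5 : (A + 2) / M = A / M + 2 * (1 / M) := by ring
          have i6 : 0 < 1 / (M : ℝ) := by positivity
          linarith
        have hd : ∀ i ∈ Finset.range (q ^ L), dist (T^[i] p') (T^[i] p) < ε := by
          intro i hi
          rw [Finset.mem_range] at hi
          rw [aux_iter α h T hT, aux_iter α h T hT, Prod.dist_eq]
          refine lt_of_le_of_lt ?_ hb1
          have nn : 0 ≤ A * q * (1 / N) + B / q := by positivity
          refine max_le ?_ ?_
          · simp only [dist_add_right]
            rw [dist_eq_norm]; linarith
          · refine (dist_add_add_le _ _ _ _).trans ?_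
            refine add_le_add (by rw [dist_eq_norm]; exact hk') ?_
            rw [dist_eq_norm, ← AddCircle.coe_sub]
            refine (le_trans ?_ (hAB r hr (q ^ L) i hi.le p'.1 p.1)).trans ?_
            · exact aux_norm_le _
            · have e1 : B * ((q ^ L : ℕ) : ℝ) / (q : ℝ) ^ (L + 1) = B / q := by
                push_cast; rw [pow_succ]; field_simp
              rw [← hqdef, e1]
              gcongr
        rw [dbar, div_lt_iff₀ hqLpos]
        calc _ < ∑ i ∈ Finset.range (q ^ L), ε :=
              Finset.sum_lt_sum_of_nonempty (Finset.nonempty_range_iff.2 (pow_pos hqn L).ne') hd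
          _ = _ := by rw [Finset.sum_const, Finset.card_range, nsmul_eq_mul, mul_comm]
      rw [huniv]
      simp [hε]
    have hqt : (q : ℝ) ^ 3 ≤ ((q ^ L : ℕ) : ℝ) ^ τ := by
      push_cast
      rw [← Real.rpow_natCast (q : ℝ) L, ← Real.rpow_mul hq.le, ← Real.rpow_natCast (q : ℝ) 3]
      exact Real.rpow_le_rpow_of_exponent_le hq1 (by exact_mod_cast hLτ)
    have hc' : (measureComplexity T ρ (q ^ L) ε : ℝ) ≤ (q : ℝ) ^ 2 * M ^ 2 := by
      calc (measureComplexity T ρ (q ^ L) ε : ℝ) ≤ ((N * N : ℕ) : ℝ) := by exact_mod_cast hcomp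
        _ = _ := by rw [hN]; push_cast; ring
    calc _ ≤ (q : ℝ) ^ 2 * M ^ 2 / (q : ℝ) ^ 3 := by gcongr
      _ = (M : ℝ) ^ 2 / q := by field_simp
      _ ≤ δ := by
        rw [div_lt_iff₀ hδ] at hqM
        rw [div_le_iff₀ hq]; linarith
  have hset : {a : ℝ | ∀ᶠ n : ℕ in atTop, a ≤ (measureComplexity T ρ n ε : ℝ) / (n : ℝ) ^ τ}
      = Set.Iic 0 := by
    ext a
    simp only [Set.mem_ofPred_eq, Set.mem_Iic, eventually_atTop]
    constructor
    · rintro ⟨n₀, hn₀⟩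
      refine le_of_forall_pos_le_add fun δ hδ => ?_
      obtain ⟨n, hn, hle⟩ := key δ hδ n₀
      rw [zero_add]
      exact (hn₀ n hn).trans hle
    · intro ha
      exact ⟨0, fun n _ => ha.trans (by positivity)⟩
  rw [Filter.liminf_eq, hset, csSup_Iic]
end

section
/- Let f ∈ ℓ^∞(ℤ) belong to K(ℤ), let X_f = X(f) be the pointwise-convergence closure of the translates of f, and let T be the shift T(x)(k) = x(k+1) on X_f. Then every T-invariant Borel probability measure ρ on X_f has discrete spectrum. -/
open MeasureTheory Filter

/-- A `T`-invariant measure `ρ` has discrete spectrum: `L²` of `ρ` is spanned by the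
eigenfunctions of the Koopman operator `g ↦ g ∘ T`. -/
def HasDiscreteSpectrum {X : Type*} [MeasurableSpace X] (T : X → X) (ρ : Measure X) : Prop :=
  (Submodule.span ℂ {g : Lp ℂ 2 ρ | g ≠ 0 ∧ ∃ c : ℂ,
      (fun x => (g : X → ℂ) (T x)) =ᵐ[ρ] fun x => c * (g : X → ℂ) x}).topologicalClosure = ⊤

open Topology in
theorem aux_span_eigen {H : Type*} [NormedAddCommGroup H] [InnerProductSpace ℂ H] [CompleteSpace H]
    (U : H →ₗᵢ[ℂ] H) (hU : ∀ v : H, TotallyBounded (Set.range fun n : ℕ => U^[n] v)) :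
    (Submodule.span ℂ {g : H | g ≠ 0 ∧ ∃ c : ℂ, U g = c • g}).topologicalClosure = ⊤ := by
  rw [Submodule.topologicalClosure_eq_top_iff, Submodule.eq_bot_iff]
  intro v hv
  by_contra hv0
  set w : ℕ → H := fun n => U^[n] v with hw
  have hws : ∀ n, w (n+1) = U (w n) := fun n => by
    simp only [hw, Function.iterate_succ_apply']
  have hwn : ∀ n, ‖w n‖ = ‖v‖ := by
    intro n
    induction n with
    | zero => simp [hw]
    | succ n ih => rw [hws, U.norm_map, ih]
  have horth : ∀ e : H, e ≠ 0 → (∃ c : ℂ, U e = c • e) → ∀ n, inner ℂ (w n) e = 0 := by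
    intro e he ⟨c, hc⟩ n
    have hc0 : c ≠ 0 := by
      rintro rfl
      apply he
      rw [← norm_eq_zero, ← U.norm_map, hc]; simp
    induction n with
    | zero =>
      exact Submodule.inner_left_of_mem_orthogonal (Submodule.subset_span (show e ∈ {g : H | g ≠ 0 ∧ ∃ c : ℂ, U g = c • g} from ⟨he, c, hc⟩)) hv
    | succ n ih =>
      have : inner ℂ (U (w n)) (U e) = 0 := by rw [U.inner_map_map, ih]
      rw [hc, inner_smul_right] at this
      rw [hws]
      exact (mul_eq_zero.1 this).resolve_left hc0
  set p : ℕ → (H →L[ℂ] H) := fun n => InnerProductSpace.rankOne ℂ (w n) (w n) with hp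
  have hpt : TotallyBounded (Set.range p) := by
    have hc : IsCompact (closure (Set.range w)) :=
      (hU v).closure.isCompact_of_isClosed isClosed_closure
    have hcont : Continuous fun x : H => InnerProductSpace.rankOne ℂ x x :=
by
      have h1 : Continuous fun x : H => (ContinuousLinearMap.toSpanSingleton ℂ x : ℂ →L[ℂ] H) :=
        (ContinuousLinearMap.toSpanSingletonLIE ℂ H).continuous
      exact h1.clm_comp (innerSL ℂ).continuous
    refine (hc.image hcont).totallyBounded.subset ?_
    rintro _ ⟨n, rfl⟩
    exact ⟨w n, subset_closure ⟨n, rfl⟩, rfl⟩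
  have hC : IsCompact (closure (convexHull ℝ (Set.range p))) :=
    hpt.convexHull.closure.isCompact_of_isClosed isClosed_closure
  set A : ℕ → (H →L[ℂ] H) := fun N => ∑ n ∈ Finset.range (N+1), ((N+1 : ℝ)⁻¹) • p n with hA
  have hAmem : ∀ N, A N ∈ convexHull ℝ (Set.range p) := by
    intro N
    refine (convex_convexHull ℝ _).sum_mem (fun _ _ => by positivity) ?_
      (fun n _ => subset_convexHull _ _ ⟨n, rfl⟩)
    simp
    field_simp
  obtain ⟨K, -, φ, hφ, hK⟩ := hC.tendsto_subseq (fun N => subset_closure (hAmem N))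
  have hKx : ∀ x, Tendsto (fun N => A (φ N) x) atTop (𝓝 (K x)) := fun x =>
    ((ContinuousLinearMap.apply ℂ H x).continuous.tendsto K).comp hK
  have hAx : ∀ N x, A N x = ((N+1 : ℝ)⁻¹) • ∑ n ∈ Finset.range (N+1), inner ℂ (w n) x • w n := by
    intro N x
    simp [hA, hp, Finset.smul_sum]
  have hpc : ∀ n, IsCompactOperator (p n) := by
    intro n
    have : IsCompactOperator (ContinuousLinearMap.toSpanSingleton ℂ (w n)) :=
      isCompactOperator_of_locallyCompactSpace_rng (ContinuousLinearMap.toSpanSingleton ℂ (w n))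
    have h2 := this.comp_clm (innerSL ℂ (w n))
    convert! h2 using 1
  have hAc : ∀ N, IsCompactOperator (A N) := by
    intro N
    have : ∀ s : Finset ℕ, IsCompactOperator (∑ n ∈ s, ((N+1 : ℝ)⁻¹) • p n : H →L[ℂ] H) := by
      intro s
      induction s using Finset.induction_on with
      | empty => simpa using isCompactOperator_zero
      | insert a s ha ih =>
        rw [Finset.sum_insert ha]
        exact ((hpc a).smul ((N+1 : ℝ)⁻¹)).add ih
    exact this _
  have hKc : IsCompactOperator K :=
    isCompactOperator_of_tendsto hK (Eventually.of_forall fun N => hAc _)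
  have hKs : K.IsSymmetric := by
    intro x y
    have h1 : Tendsto (fun N => inner ℂ (A (φ N) x) y) atTop (𝓝 (inner ℂ (K x) y)) :=
      (hKx x).inner tendsto_const_nhds
    have h2 : Tendsto (fun N => inner ℂ x (A (φ N) y)) atTop (𝓝 (inner ℂ x (K y))) :=
      tendsto_const_nhds.inner (hKx y)
    refine tendsto_nhds_unique h1 (h2.congr fun N => ?_)
    simp only [hAx, inner_smul_left, inner_smul_right, inner_sum, sum_inner,
      inner_smul_right_eq_smul, inner_smul_left_eq_smul, inner_conj_symm]
    congr 1
    refine Finset.sum_congr rfl fun n _ => ?_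
    ring
  have hcomm : ∀ x, K (U x) = U (K x) := by
    intro x
    have h1 := hKx (U x)
    have h2 := (U.continuous.tendsto (K x)).comp (hKx x)
    have h3 := h2.sub h1
    have h4 : Tendsto (fun N : ℕ => ((φ N + 1 : ℝ)⁻¹) * (2 * ‖v‖ * ‖v‖ * ‖x‖)) atTop (𝓝 0) := by
      have : Tendsto (fun N : ℕ => ((N + 1 : ℝ)⁻¹)) atTop (𝓝 0) := by
        simpa using tendsto_one_div_add_atTop_nhds_zero_nat (𝕜 := ℝ)
      simpa using (this.comp hφ.tendsto_atTop).mul_const (2 * ‖v‖ * ‖v‖ * ‖x‖)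
    have h5 := squeeze_zero_norm (a := fun N : ℕ => ((φ N + 1 : ℝ)⁻¹) * (2 * ‖v‖ * ‖v‖ * ‖x‖))
      (f := fun N => U (A (φ N) x) - A (φ N) (U x)) ?_ h4
    · have := tendsto_nhds_unique h3 h5
      exact (sub_eq_zero.1 this).symm
    · intro N
      have key : U (A (φ N) x) - A (φ N) (U x) = ((φ N + 1 : ℝ)⁻¹) •
          (inner ℂ (w (φ N + 1)) (U x) • w (φ N + 1) - inner ℂ (w 0) (U x) • w 0) := by
        rw [hAx, hAx, ← Finset.sum_range_sub (fun n => inner ℂ (w n) (U x) • w n),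
          Finset.sum_sub_distrib, smul_sub]
        congr 1
        have : ∀ (r : ℝ) (y : H), U (r • y) = r • U y := fun r y => by
          rw [← Complex.coe_smul, ← Complex.coe_smul, U.map_smul]
        rw [this, map_sum]
        congr 1
        refine Finset.sum_congr rfl fun n _ => ?_
        rw [hws, U.inner_map_map, U.map_smul]
      have hb : ∀ n, ‖inner ℂ (w n) (U x) • w n‖ ≤ ‖v‖ * ‖x‖ * ‖v‖ := by
        intro n
        rw [norm_smul, hwn]
        gcongr
        simpa [hwn] using norm_inner_le_norm (𝕜 := ℂ) (w n) (U x)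
      rw [key, norm_smul, Real.norm_of_nonneg (by positivity)]
      gcongr
      refine (norm_sub_le _ _).trans ?_
      linarith [hb 0, hb (φ N + 1)]
  have hK0 : K ≠ 0 := by
    have hvpos : 0 < ‖v‖ := norm_pos_iff.2 hv0
    obtain ⟨t, -, htf, htc⟩ := Metric.finite_approx_of_totallyBounded (hU v) (‖v‖/2) (by positivity)
    rintro rfl
    have h1 : Tendsto (fun N => ∑ y ∈ htf.toFinset, RCLike.re (inner ℂ y (A (φ N) y))) atTop
        (𝓝 (∑ y ∈ htf.toFinset, RCLike.re (inner ℂ y ((0 : H →L[ℂ] H) y)))) :=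
      tendsto_finsetSum _ fun y _ =>
        (RCLike.continuous_re.tendsto _).comp (tendsto_const_nhds.inner (hKx y))
    have h2 : ∀ N, (‖v‖^2/2)^2 ≤ ∑ y ∈ htf.toFinset, RCLike.re (inner ℂ y (A (φ N) y)) := by
      intro N
      have h3 : ∀ y : H, RCLike.re (inner ℂ y (A (φ N) y)) =
          ((φ N+1 : ℝ)⁻¹) * ∑ n ∈ Finset.range (φ N+1), ‖(inner ℂ (w n) y : ℂ)‖^2 := by
        intro y
        rw [hAx, ← Complex.coe_smul, inner_smul_right, inner_sum]
        simp only [inner_smul_right]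
        have : ∀ n, (inner ℂ (w n) y : ℂ) * inner ℂ y (w n) = ((‖(inner ℂ (w n) y : ℂ)‖^2 : ℝ) : ℂ) := by
          intro n
          rw [← inner_conj_symm y (w n), Complex.mul_conj, Complex.normSq_eq_norm_sq]
        simp only [this]
        rw [← Complex.ofReal_sum, ← Complex.ofReal_mul]
        exact Complex.ofReal_re _
      simp only [h3]
      rw [← Finset.mul_sum, Finset.sum_comm]
      have h4 : ∀ n, (‖v‖^2/2)^2 ≤ ∑ y ∈ htf.toFinset, ‖(inner ℂ (w n) y : ℂ)‖^2 := by
        intro n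
        have := htc ⟨n, rfl⟩
        simp only [Set.mem_iUnion, Metric.mem_ball, exists_prop] at this
        obtain ⟨y, hy, hd⟩ := this
        rw [dist_eq_norm] at hd
        refine le_trans ?_ (Finset.single_le_sum (f := fun y => ‖(inner ℂ (w n) y : ℂ)‖^2)
          (fun _ _ => by positivity) (htf.mem_toFinset.2 hy))
        have h5 : (inner ℂ (w n) y : ℂ) = inner ℂ (w n) (w n) - inner ℂ (w n) (w n - y) := by
          rw [← inner_sub_right]; simp
        have h6 : ‖(inner ℂ (w n) (w n - y) : ℂ)‖ ≤ ‖v‖ * (‖v‖/2) := by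
          refine (norm_inner_le_norm _ _).trans ?_
          rw [hwn]
          gcongr
        have h7 : ‖(inner ℂ (w n) (w n) : ℂ)‖ = ‖v‖^2 := by
          rw [inner_self_eq_norm_sq_to_K, hwn]; simp
        have h8 : ‖v‖^2/2 ≤ ‖(inner ℂ (w n) y : ℂ)‖ := by
          rw [h5]
          refine le_trans ?_ (norm_sub_norm_le _ _)
          rw [h7]; nlinarith
        gcongr
      have h9 := Finset.card_nsmul_le_sum (Finset.range (φ N + 1)) _ _ (fun n _ => h4 n)
      rw [Finset.card_range, nsmul_eq_mul] at h9
      rw [inv_mul_eq_div, le_div_iff₀ (by positivity), mul_comm]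
      exact_mod_cast h9
    have h3 := ge_of_tendsto' h1 h2
    simp at h3
    exact hv0 h3
  have hex : ∃ μ, Module.End.HasEigenvalue (K : Module.End ℂ H) μ ∧ μ ≠ 0 := by
    by_contra! h
    exact hK0 ((ContinuousLinearMap.eq_zero_of_forall_hasEigenvalue_eq_zero hKc hKs).1 h)
  obtain ⟨μ, hμ, hμ0⟩ := hex
  have := ContinuousLinearMap.finite_dimensional_eigenspace hKc μ hμ0
  have : Nontrivial (Module.End.eigenspace (K : Module.End ℂ H) μ) :=
    Submodule.nontrivial_iff_ne_bot.2 hμ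
  have hinv : ∀ x ∈ Module.End.eigenspace (K : Module.End ℂ H) μ,
      U.toLinearMap x ∈ Module.End.eigenspace (K : Module.End ℂ H) μ := by
    intro x hx
    rw [Module.End.mem_eigenspace_iff] at hx ⊢
    have hx' : K x = μ • x := hx
    change K (U x) = μ • U x
    rw [hcomm, hx', U.map_smul]
  obtain ⟨c, hc⟩ := Module.End.exists_eigenvalue (U.toLinearMap.restrict hinv)
  obtain ⟨e, he⟩ := hc.exists_hasEigenvector
  have he0 : (e : H) ≠ 0 := fun h => he.2 (Subtype.ext h)
  have hUe : U (e : H) = c • (e : H) := congrArg Subtype.val he.apply_eq_smul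
  have hKe : K (e : H) = μ • (e : H) := Module.End.mem_eigenspace_iff.1 e.2
  have hKe0 : K (e : H) = 0 := by
    refine tendsto_nhds_unique (hKx e) (tendsto_const_nhds.congr fun N => ?_)
    rw [hAx]
    simp [horth e he0 ⟨c, hUe⟩]
  rw [hKe0] at hKe
  exact (smul_ne_zero hμ0 he0) hKe.symm

theorem aux_dense {H : Type*} [NormedAddCommGroup H] [InnerProductSpace ℂ H]
    (U : H →ₗᵢ[ℂ] H) (S : Set H) (hS : Dense S)
    (hU : ∀ v ∈ S, TotallyBounded (Set.range fun n : ℕ => U^[n] v)) (v : H) :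
    TotallyBounded (Set.range fun n : ℕ => U^[n] v) := by
  rw [Metric.totallyBounded_iff]
  intro ε hε
  obtain ⟨u, hu, hd⟩ := Metric.dense_iff.1 hS v (ε/2) (by positivity)
  obtain ⟨t, ht, hc⟩ := Metric.totallyBounded_iff.1 (hU _ hd) (ε/2) (by positivity)
  refine ⟨t, ht, ?_⟩
  rintro _ ⟨n, rfl⟩
  have h := hc ⟨n, rfl⟩
  simp only [Set.mem_iUnion, Metric.mem_ball, exists_prop] at h hu ⊢
  obtain ⟨y, hy, h⟩ := h
  refine ⟨y, hy, ?_⟩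
  have h2 : dist (U^[n] v) (U^[n] u) = dist v u := by
    clear h
    induction n with
    | zero => rfl
    | succ n ih => rw [Function.iterate_succ_apply', Function.iterate_succ_apply', U.dist_map, ih]
  rw [dist_comm] at hu
  linarith [dist_triangle (U^[n] v) (U^[n] u) y]

theorem aux_norm_sq {X : Type*} [MeasurableSpace X] (μ : Measure X) (h : Lp ℂ 2 μ) :
    ‖h‖^2 = ∫ x, ‖h x‖^2 ∂μ := by
  have h1 := L2.inner_def (𝕜 := ℂ) h h
  rw [inner_self_eq_norm_sq_to_K] at h1
  have h2 : (fun a => inner ℂ (h a) (h a)) = fun a => ((‖h a‖^2 : ℝ) : ℂ) := by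
    ext a
    rw [inner_self_eq_norm_sq_to_K]; simp
  have h3 : ∫ a, ((‖h a‖^2 : ℝ) : ℂ) ∂μ = ((∫ a, ‖h a‖^2 ∂μ : ℝ) : ℂ) := integral_ofReal
  rw [h2, h3] at h1
  exact Complex.ofReal_injective (by rw [← h1]; push_cast; rfl)

theorem aux_tb {X : Type*} [MeasurableSpace X] (μ : Measure X) [IsProbabilityMeasure μ]
    (G : ℕ → Lp ℂ 2 μ) (g : ℕ → X → ℂ) (hG : ∀ n, G n =ᵐ[μ] g n) (M : ℝ)
    (hM : ∀ n x, ‖g n x‖ ≤ M)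
    (hyp : ∀ ε > (0:ℝ), ∃ A : Set X, MeasurableSet A ∧ μ.real Aᶜ ≤ ε ∧ ∃ F : Finset X,
      ∀ x ∈ A, ∃ y ∈ F, ∀ n, ‖g n x - g n y‖ ≤ ε) : TotallyBounded (Set.range G) := by
  rw [Metric.totallyBounded_iff]
  intro ε hε
  obtain ⟨δ, hδ, hδ1, hδε⟩ : ∃ δ : ℝ, 0 < δ ∧ δ ≤ 1 ∧ (9 + 4 * M^2) * δ < ε^2 := by
    have hp : 0 < 9 + 4 * M^2 := by positivity
    refine ⟨min 1 (ε^2 / (2 * (9 + 4 * M^2))), by positivity, min_le_left _ _, ?_⟩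
    calc _ ≤ (9 + 4 * M^2) * (ε^2 / (2 * (9 + 4 * M^2))) := by gcongr; exact min_le_right _ _
      _ = ε^2 / 2 := by field_simp
      _ < ε^2 := by have : 0 < ε^2 := by positivity
                    linarith
  obtain ⟨A, hA, hAμ, F, hF⟩ := hyp δ hδ
  let V : ℕ → (F → ℂ) := fun n y => g n y
  have hVb : TotallyBounded (Set.range V) := by
    have : Bornology.IsBounded (Set.range V) := by
      refine (Metric.isBounded_closedBall (x := (0 : F → ℂ)) (r := max M 0)).subset ?_
      rintro _ ⟨n, rfl⟩
      rw [mem_closedBall_zero_iff, pi_norm_le_iff_of_nonneg (le_max_right _ _)]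
      intro y
      exact (hM n y).trans (le_max_left _ _)
    exact Metric.isCompact_of_isClosed_isBounded isClosed_closure this.closure |>.totallyBounded.subset subset_closure
  obtain ⟨t, htV, htf, htc⟩ := Metric.finite_approx_of_totallyBounded hVb δ hδ
  refine ⟨(fun z => G (Function.invFun V z)) '' t, htf.image _, ?_⟩
  rintro _ ⟨n, rfl⟩
  have hn := htc ⟨n, rfl⟩
  simp only [Set.mem_iUnion, Metric.mem_ball, exists_prop] at hn
  obtain ⟨z, hz, hd⟩ := hn
  simp only [Set.mem_iUnion, Metric.mem_ball, exists_prop]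
  refine ⟨_, ⟨z, hz, rfl⟩, ?_⟩
  set m := Function.invFun V z with hm
  have hmz : V m = z := Function.invFun_eq (htV hz)
  rw [dist_eq_norm]
  refine lt_of_pow_lt_pow_left₀ 2 hε.le (lt_of_le_of_lt ?_ hδε)
  rw [aux_norm_sq]
  have hb : ∀ᵐ x ∂μ, ‖(G n - G m : Lp ℂ 2 μ) x‖^2 ≤ 9 * δ^2 + Aᶜ.indicator (fun _ => 4 * M^2) x := by
    filter_upwards [hG n, hG m, Lp.coeFn_sub (G n) (G m)] with x h1 h2 h3
    rw [h3, Pi.sub_apply, h1, h2]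
    by_cases hx : x ∈ A
    · simp only [Set.mem_compl_iff, hx, not_true_eq_false, not_false_eq_true,
        Set.indicator_of_notMem, add_zero]
      obtain ⟨y, hy, hxy⟩ := hF x hx
      have h4 : ‖g n y - g m y‖ < δ := by
        have := (dist_pi_lt_iff hδ).1 hd ⟨y, hy⟩
        rw [← hmz, dist_eq_norm] at this
        exact this
      have h5 : ‖g n x - g m x‖ ≤ 3 * δ := by
        have e : g n x - g m x = (g n x - g n y) + (g n y - g m y) - (g m x - g m y) := by ring
        rw [e]
        refine (norm_sub_le _ _).trans ?_
        linarith [norm_add_le (g n x - g n y) (g n y - g m y), hxy n, hxy m]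
      calc ‖g n x - g m x‖^2 ≤ (3*δ)^2 := by gcongr
        _ = _ := by ring
    · rw [Set.indicator_of_mem (by simpa using hx)]
      have h5 : ‖g n x - g m x‖ ≤ 2 * M := by
        refine (norm_sub_le _ _).trans ?_
        linarith [hM n x, hM m x]
      have h6 : ‖g n x - g m x‖^2 ≤ (2*M)^2 := by gcongr
      nlinarith [sq_nonneg δ]
  have hint : Integrable (fun x => 9 * δ^2 + Aᶜ.indicator (fun _ => 4 * M^2) x) μ :=
    (integrable_const _).add ((integrable_const _).indicator hA.compl)
  calc _ ≤ ∫ x, (9 * δ^2 + Aᶜ.indicator (fun _ => 4 * M^2) x) ∂μ :=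
        integral_mono_of_nonneg (Eventually.of_forall fun _ => by positivity) hint hb
    _ = 9 * δ^2 + μ.real Aᶜ * (4 * M^2) := by
        rw [integral_add (integrable_const _) ((integrable_const _).indicator hA.compl),
          integral_indicator_const _ hA.compl]
        simp
    _ ≤ 9 * δ^2 + δ * (4 * M^2) := by gcongr
    _ ≤ _ := by nlinarith

theorem aux_unif (Xf : Set (ℤ → ℂ)) (hX : IsCompact Xf) (g : (ℤ → ℂ) → ℂ) (hg : Continuous g)
    (ε : ℝ) (hε : 0 < ε) : ∃ η > (0:ℝ), ∀ x ∈ Xf, ∀ y ∈ Xf, (∀ k, ‖x k - y k‖ ≤ η) →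
      ‖g x - g y‖ ≤ ε := by
  have h := hX.uniformContinuousOn_of_continuous hg.continuousOn
  have h2 : UniformContinuousOn (fun x : UniformFun ℤ ℂ => g (UniformFun.toFun x))
      (UniformFun.toFun ⁻¹' Xf) :=
    h.comp UniformFun.uniformContinuous_toFun.uniformContinuousOn (fun x hx => hx)
  have hb := UniformFun.hasBasis_uniformity_of_basis ℤ ℂ (Metric.uniformity_basis_dist_le (α := ℂ))
  rw [UniformContinuousOn,
    (hb.inf_principal _).tendsto_iff Metric.uniformity_basis_dist_le] at h2
  obtain ⟨η, hη, h3⟩ := h2 ε hε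
  refine ⟨η, hη, fun x hx y hy hxy => ?_⟩
  have := h3 (UniformFun.ofFun x, UniformFun.ofFun y) ⟨fun k => by
    simpa [dist_eq_norm] using hxy k, hx, hy⟩
  simpa [dist_eq_norm] using this

/-- For `f` in Veech's class `K(ℤ)`, every shift-invariant Borel probability measure on
`X_f` (the pointwise-convergence closure of the translates of `f`) has discrete spectrum. -/
theorem discrete_spectrum_of_Veech_class
    (f : ℤ → ℂ) (hbd : ∃ C : ℝ, ∀ k : ℤ, ‖f k‖ ≤ C)
    -- `X(f)`: the closure of the translates of `f` in the product (pointwise) topology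
    (Xf : Set (ℤ → ℂ))
    (hXf : Xf = closure (Set.range fun n : ℤ => fun k : ℤ => f (k + n)))
    -- `f ∈ K(ℤ)`: `X(f)` is separable in the `ℓ^∞` norm topology
    (hsep : ∃ D : Set (ℤ → ℂ), D.Countable ∧ D ⊆ Xf ∧
      ∀ x ∈ Xf, ∀ ε > (0 : ℝ), ∃ y ∈ D, ∀ k : ℤ, ‖x k - y k‖ < ε)
    -- the shift `T(x)(k) = x(k+1)`
    (T : (ℤ → ℂ) → (ℤ → ℂ)) (hTshift : ∀ x k, T x k = x (k + 1))
    -- a shift-invariant Borel probability measure carried by `X_f`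
    (ρ : Measure (ℤ → ℂ)) (hρprob : IsProbabilityMeasure ρ)
    (hρXf : ρ Xf = 1) (hρinv : MeasurePreserving T ρ ρ) :
    HasDiscreteSpectrum T ρ := by
  obtain ⟨C, hC⟩ := hbd
  obtain ⟨D, hDc, hDX, hD⟩ := hsep
  have hXc : IsClosed Xf := hXf ▸ isClosed_closure
  have hXk : IsCompact Xf := by
    have hk : IsCompact (Set.univ.pi fun _ : ℤ => Metric.closedBall (0 : ℂ) C) :=
      isCompact_univ_pi fun _ => isCompact_closedBall _ _
    refine hk.of_isClosed_subset hXc ?_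
    rw [hXf]
    refine closure_minimal ?_ hk.isClosed
    rintro _ ⟨n, rfl⟩ k -
    simpa using hC (k + n)
  have hTc : Continuous T := by
    refine continuous_pi fun k => ?_
    simp only [hTshift]
    exact continuous_apply _
  have hTX : Set.MapsTo T Xf Xf := by
    rw [hXf]
    refine Set.MapsTo.closure ?_ hTc
    rintro _ ⟨n, rfl⟩
    refine ⟨n + 1, ?_⟩
    funext k
    rw [hTshift]
    change f (k + (n + 1)) = f (k + 1 + n)
    congr 1
    ring
  have hTit : ∀ (n : ℕ) x k, (T^[n]) x k = x (k + n) := by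
    intro n
    induction n with
    | zero => intro x k; simp
    | succ n ih =>
      intro x k
      rw [Function.iterate_succ_apply', hTshift, ih]
      congr 1
      push_cast
      ring
  have hDne : D.Nonempty := by
    have hne : Xf.Nonempty := by
      rw [Set.nonempty_iff_ne_empty]
      rintro h
      rw [h] at hρXf
      simp at hρXf
    obtain ⟨x, hx⟩ := hne
    obtain ⟨y, hy, -⟩ := hD x hx 1 one_pos
    exact ⟨y, hy⟩
  obtain ⟨d, rfl⟩ := hDc.exists_eq_range hDne
  let U : Lp ℂ 2 ρ →ₗᵢ[ℂ] Lp ℂ 2 ρ := Lp.compMeasurePreservingₗᵢ ℂ T hρinv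
  have hUit : ∀ (n : ℕ) (v : Lp ℂ 2 ρ), U^[n] v =ᵐ[ρ] v ∘ T^[n] := by
    intro n v
    have h1 : U^[n] v = Lp.compMeasurePreserving T^[n] (hρinv.iterate n) v :=
      congrFun (Lp.compMeasurePreserving_iterate (E := ℂ) (p := 2) hρinv n) v
    rw [h1]
    exact Lp.coeFn_compMeasurePreserving v (hρinv.iterate n)
  have hTB : ∀ g : BoundedContinuousFunction (ℤ → ℂ) ℂ, TotallyBounded (Set.range fun n : ℕ =>
      U^[n] (BoundedContinuousFunction.toLp 2 ρ ℂ g)) := by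
    intro g
    refine aux_tb ρ _ (fun n x => g (T^[n] x)) (fun n => ?_) ‖g‖
      (fun n x => g.norm_coe_le_norm _) ?_
    · refine (hUit n _).trans ?_
      exact (hρinv.iterate n).quasiMeasurePreserving.ae_eq_comp
        (BoundedContinuousFunction.coeFn_toLp 2 ρ ℂ g)
    · intro ε hε
      obtain ⟨η, hη, hηg⟩ := aux_unif Xf hXk g g.continuous ε hε
      let B : ℕ → Set (ℤ → ℂ) := fun i => Xf ∩ {x | ∀ k, ‖x k - d i k‖ ≤ η}
      have hBm : ∀ i, MeasurableSet (B i) := by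
        intro i
        refine (hXc.inter ?_).measurableSet
        rw [show {x : ℤ → ℂ | ∀ k, ‖x k - d i k‖ ≤ η} = ⋂ k, {x | ‖x k - d i k‖ ≤ η} by
          ext x; simp]
        exact isClosed_iInter fun k => isClosed_le (by fun_prop) continuous_const
      have hBU : ⋃ i, B i = Xf := by
        refine Set.Subset.antisymm (Set.iUnion_subset fun i => Set.inter_subset_left) ?_
        intro x hx
        obtain ⟨_, ⟨i, rfl⟩, hi⟩ := hD x hx η hη
        exact Set.mem_iUnion.2 ⟨i, hx, fun k => (hi k).le⟩
      have ht := tendsto_measure_iUnion_accumulate (μ := ρ) (f := B)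
      rw [hBU, hρXf] at ht
      have ht2 : Tendsto (fun i => ρ.real (Set.accumulate B i)) atTop (nhds 1) := by
        have h := (ENNReal.tendsto_toReal ENNReal.one_ne_top).comp ht
        rw [ENNReal.toReal_one] at h
        exact h
      obtain ⟨N, hN⟩ := (ht2.eventually (lt_mem_nhds (show 1 - ε < 1 by linarith))).exists
      have hAm : MeasurableSet (Set.accumulate B N) := by
        rw [Set.accumulate_def]
        exact MeasurableSet.iUnion fun i => MeasurableSet.iUnion fun _ => hBm i
      classical
      refine ⟨Set.accumulate B N, hAm, ?_, (Finset.range (N+1)).image d, ?_⟩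
      · rw [probReal_compl_eq_one_sub hAm]
        linarith
      · intro x hx
        obtain ⟨i, hi, hxX, hxi⟩ := Set.mem_accumulate.1 hx
        refine ⟨d i, Finset.mem_image_of_mem _ (Finset.mem_range.2 (by omega)), fun n => ?_⟩
        refine hηg _ (hTX.iterate n hxX) _ (hTX.iterate n (hDX ⟨i, rfl⟩)) fun k => ?_
        rw [hTit, hTit]
        exact hxi _
  have hall := aux_dense U _ (BoundedContinuousFunction.toLp_denseRange (p := 2) ℂ ρ ℂ (by simp))
    (by rintro _ ⟨g, rfl⟩; exact hTB g)
  have hfin := aux_span_eigen U hall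
  unfold HasDiscreteSpectrum
  rw [← hfin]
  congr 3
  ext g
  refine and_congr_right fun _ => exists_congr fun c => ?_
  have h1 : U g =ᵐ[ρ] fun x => g (T x) := hUit 1 g
  have h2 : (c • g : Lp ℂ 2 ρ) =ᵐ[ρ] fun x => c * g x := Lp.coeFn_smul c g
  constructor
  · intro h
    exact Lp.ext (h1.trans (h.trans h2.symm))
  · intro h
    rw [h] at h1
    exact h1.symm.trans h2
end

section
/- Let (X,T) be a topological dynamical system with metric d. Then for every T-invariant Borel probability measure ρ and every ε > 0, limsup_{n→∞} (1/n) log S_n(d,ρ,ε) ≤ h_top(T), where h_top(T) is the topological entropy of (X,T). -/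
open MeasureTheory Filter

/-- For every invariant Borel probability measure `ρ` and every `ε > 0`,
`limsup_{n→∞} (1/n) log S_n(d,ρ,ε)` is at most the topological entropy of `(X,T)`. -/
theorem limsup_log_measureComplexity_le_topologicalEntropy
    {X : Type*} [MetricSpace X] [CompactSpace X] [MeasurableSpace X] [BorelSpace X]
    (T : X ≃ₜ X)
    (ρ : Measure X) (hρprob : IsProbabilityMeasure ρ)
    (hρinv : MeasurePreserving (T : X → X) ρ ρ)
    (ε : ℝ) (hε : 0 < ε) :
    Filter.atTop.limsup
        (fun n : ℕ => ((Real.log (measureComplexity (T : X → X) ρ n ε) / n : ℝ) : EReal))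
      ≤ Dynamics.coverEntropy (T : X → X) Set.univ := by
  have hne : Nonempty X := by
    by_contra h
    rw [not_nonempty_iff] at h
    have h1 := hρprob.measure_univ
    rw [Set.univ_eq_empty_iff.2 h, measure_empty] at h1
    exact zero_ne_one h1
  have hU : {p : X × X | dist p.1 p.2 < ε} ∈ uniformity X := Metric.dist_mem_uniformity hε
  refine le_trans ?_ (Dynamics.coverEntropyEntourage_le_coverEntropy (T : X → X) Set.univ hU)
  unfold Dynamics.coverEntropyEntourage ExpGrowth.expGrowthSup
  refine Filter.limsup_le_limsup ?_
  filter_upwards [eventually_ge_atTop 1] with n hn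
  have hn0 : (0 : ℝ) < n := by exact_mod_cast hn
  obtain ⟨s, hs, hcard⟩ := (Dynamics.coverMincard_finite_iff (T : X → X) Set.univ _ n).1
    (Dynamics.coverMincard_finite_of_isCompact_invariant isCompact_univ
      (Set.mapsTo_univ _ _) hU n)
  have hspos : 0 < s.card := by
    obtain ⟨x, hx⟩ := hs.nonempty Set.univ_nonempty
    exact Finset.card_pos.2 ⟨x, hx⟩
  have hle : measureComplexity (T : X → X) ρ n ε ≤ s.card := by
    apply Nat.sInf_le
    refine ⟨fun i => (s.equivFin.symm i : X), ?_⟩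
    have hcov : (⋃ i : Fin s.card, {y | dbar (T : X → X) n (s.equivFin.symm i : X) y < ε})
        = Set.univ := by
      refine Set.eq_univ_of_forall fun y => ?_
      obtain ⟨x, hx, hxy⟩ := hs (Set.mem_univ y)
      refine Set.mem_iUnion.2 ⟨s.equivFin ⟨x, hx⟩, ?_⟩
      have hk := Dynamics.mem_dynEntourage.1 hxy
      simp only [Set.mem_setOf_eq, Equiv.symm_apply_apply, dbar]
      rw [div_lt_iff₀ hn0]
      calc ∑ i ∈ Finset.range n, dist ((T : X → X)^[i] x) ((T : X → X)^[i] y)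
          < ∑ i ∈ Finset.range n, ε := by
            refine Finset.sum_lt_sum_of_nonempty (by simp; omega) fun i hi => ?_
            rw [dist_comm]
            exact hk i (Finset.mem_range.1 hi)
        _ = ε * n := by simp [mul_comm]
    rw [hcov, measure_univ]
    simp [hε]
  have hlog : Real.log (measureComplexity (T : X → X) ρ n ε) ≤ Real.log s.card := by
    rcases Nat.eq_zero_or_pos (measureComplexity (T : X → X) ρ n ε) with h | h
    · rw [h]
      simp only [Nat.cast_zero, Real.log_zero]
      exact Real.log_natCast_nonneg _
    · exact Real.log_le_log (by exact_mod_cast h) (by exact_mod_cast hle)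
  have hcast : ENNReal.log ((Dynamics.coverMincard (T : X → X) Set.univ
      {p : X × X | dist p.1 p.2 < ε} n : ℕ∞) : ENNReal) = ((Real.log s.card : ℝ) : EReal) := by
    rw [← hcard, ENat.toENNReal_coe, ENNReal.log_pos_real (by exact_mod_cast hspos.ne')
      (ENNReal.natCast_ne_top _), ENNReal.toReal_natCast]
  show _ ≤ ENNReal.log _ / (n : EReal)
  rw [hcast, ← EReal.coe_natCast, ← EReal.coe_div]
  exact EReal.coe_le_coe_iff.2 (div_le_div_of_nonneg_right hlog hn0.le)
end

section
/- Let (X,T) be a topological dynamical system with metric d. Then sup_{ρ ∈ 𝓜(X,T)} lim_{ε→0} limsup_{n→∞} (1/n) log S_n(d,ρ,ε) = h_top(T) = sup_{ρ ∈ 𝓜(X,T)} lim_{ε→0} liminf_{n→∞} (1/n) log S_n(d,ρ,ε), where the supremum is over all T-invariant Borel probability measures ρ and h_top(T) is the topological entropy of (X,T). -/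
open MeasureTheory Filter

open Topology
open scoped ENNReal


noncomputable def empMeas {X : Type*} [MeasurableSpace X] (T : X → X) (N : ℕ) (x : X) : Measure X :=
  (N : ℝ≥0∞)⁻¹ • ∑ i ∈ Finset.range N, Measure.dirac (T^[i] x)

lemma empMeas_prob {X : Type*} [MeasurableSpace X] (T : X → X) (N : ℕ) (hN : 0 < N) (x : X) :
    IsProbabilityMeasure (empMeas T N x) := by
  constructor
  simp only [empMeas, Measure.smul_apply, Measure.finsetSum_apply, measure_univ, Finset.sum_const,
    Finset.card_range, smul_eq_mul, nsmul_eq_mul, mul_one]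
  exact ENNReal.inv_mul_cancel (by simp [hN.ne']) (by simp)

open Classical in
lemma empMeas_apply {X : Type*} [MeasurableSpace X] (T : X → X) (N : ℕ) (x : X)
    {G : Set X} (hG : MeasurableSet G) :
    (empMeas T N x G).toReal =
      (((Finset.range N).filter (fun k => T^[k] x ∈ G)).card : ℝ) / N := by
  simp only [empMeas, Measure.smul_apply, Measure.finsetSum_apply, smul_eq_mul]
  simp only [Measure.dirac_apply' _ hG, Set.indicator_apply, Pi.one_apply]
  rw [Finset.sum_boole]
  simp [div_eq_inv_mul]

lemma empMeas_integral {X : Type*} [MeasurableSpace X] [TopologicalSpace X] [OpensMeasurableSpace X]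
    (T : X → X) (N : ℕ) (x : X)
    (f : BoundedContinuousFunction X ℝ) :
    ∫ y, f y ∂(empMeas T N x) = (∑ i ∈ Finset.range N, f (T^[i] x)) / N := by
  rw [empMeas, integral_smul_measure, integral_finsetSum_measure]
  · have : ∀ i, ∫ y, f y ∂(Measure.dirac (T^[i] x)) = f (T^[i] x) := fun i =>
      integral_dirac' _ _ f.continuous.measurable.stronglyMeasurable
    simp [this, div_eq_inv_mul]
  · intro i _
    exact f.integrable _

open Classical in
lemma empMeas_finite_cover {X : Type*} [MetricSpace X] [CompactSpace X] [MeasurableSpace X]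
    [BorelSpace X] (T : X → X) (hT : Continuous T) {ι : Type*} (G : ι → Set X)
    (hG : ∀ i, IsOpen (G i)) (a : ℝ)
    (h : ∀ μ : Measure X, IsProbabilityMeasure μ → MeasurePreserving T μ μ →
      ∃ i, a < (μ (G i)).toReal) :
    ∃ s : Finset ι, ∃ N0 : ℕ, ∀ N ≥ N0, ∀ x : X, ∃ i ∈ s,
      a * N < (((Finset.range N).filter (fun k => T^[k] x ∈ G i)).card : ℝ) := by
  let V : ι → Set (ProbabilityMeasure X) := fun i => {μ | a < ((μ : Measure X) (G i)).toReal}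
  have hV : ∀ i, IsOpen (V i) := by
    intro i
    rw [isOpen_iff_mem_nhds]
    intro μ hμ
    by_cases ha : a < 0
    · exact Filter.univ_mem' fun ν => lt_of_lt_of_le ha ENNReal.toReal_nonneg
    push Not at ha
    have h1 := ProbabilityMeasure.le_liminf_measure_open_of_tendsto
      (tendsto_id (x := 𝓝 μ)) (hG i)
    have h2 : ENNReal.ofReal a < (μ : Measure X) (G i) :=
      (ENNReal.ofReal_lt_iff_lt_toReal ha (measure_ne_top _ _)).2 hμ
    have h3 := eventually_lt_of_lt_liminf (lt_of_lt_of_le h2 h1)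
    filter_upwards [h3] with ν hν
    exact (ENNReal.ofReal_lt_iff_lt_toReal ha (measure_ne_top _ _)).1 hν
  let mp : ProbabilityMeasure X → ProbabilityMeasure X := fun ν => ν.map hT.measurable.aemeasurable
  have hmp : Continuous mp := ProbabilityMeasure.continuous_map hT
  let M : Set (ProbabilityMeasure X) := {μ | mp μ = μ}
  have hM : IsCompact M := (isClosed_eq hmp continuous_id).isCompact
  have hMV : M ⊆ ⋃ i, V i := by
    intro μ hμ
    obtain ⟨i, hi⟩ := h μ inferInstance ⟨hT.measurable, by
      have := congrArg (fun ν : ProbabilityMeasure X => (ν : Measure X)) (show mp μ = μ from hμ)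
      simpa [mp] using this⟩
    exact Set.mem_iUnion.2 ⟨i, hi⟩
  obtain ⟨s, hs⟩ := hM.elim_finite_subcover V hV hMV
  refine ⟨s, ?_⟩
  by_contra! hcon
  choose N hN x hx using hcon
  have hpos : ∀ k, 0 < N (k+1) := fun k => lt_of_lt_of_le (Nat.succ_pos k) (hN (k+1))
  let u : ℕ → ProbabilityMeasure X := fun k =>
    ⟨empMeas T (N (k+1)) (x (k+1)), empMeas_prob T _ (hpos k) _⟩
  have huK : ∀ k, u k ∈ (⋃ i ∈ s, V i)ᶜ := by
    intro k hk
    simp only [Set.mem_iUnion] at hk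
    obtain ⟨i, his, hi⟩ := hk
    have h1 : a < (empMeas T (N (k+1)) (x (k+1)) (G i)).toReal := hi
    rw [empMeas_apply _ _ _ (hG i).measurableSet,
      lt_div_iff₀ (by exact_mod_cast hpos k)] at h1
    exact absurd h1 (not_lt.2 (hx (k+1) i his))
  have hK : IsCompact (⋃ i ∈ s, V i)ᶜ :=
    (isOpen_biUnion fun i _ => hV i).isClosed_compl.isCompact
  let F : Ultrafilter ℕ := hyperfilter ℕ
  obtain ⟨μ, hμK, hμ⟩ := hK.ultrafilter_le_nhds (F.map u) (by
    rw [le_principal_iff]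
    exact Filter.mem_map.2 (Filter.univ_mem' huK))
  have ht : Tendsto u F (𝓝 μ) := hμ
  have hF : (F : Filter ℕ) ≤ atTop := by
    rw [← Nat.cofinite_eq_atTop]; exact hyperfilter_le_cofinite
  apply hμK
  apply hs
  have h1 : Tendsto (fun k => mp (u k)) F (𝓝 (mp μ)) := (hmp.tendsto μ).comp ht
  have h2 : Tendsto (fun k => mp (u k)) F (𝓝 μ) := by
    rw [ProbabilityMeasure.tendsto_iff_forall_integral_tendsto] at ht ⊢
    intro f
    have h3 : ∀ k, ∫ y, f y ∂(mp (u k) : Measure X) = ∫ y, f y ∂(u k : Measure X) +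
        (f (T^[N (k+1)] (x (k+1))) - f (x (k+1))) / (N (k+1)) := by
      intro k
      have e1 : ∫ y, f y ∂(mp (u k) : Measure X) = ∫ y, f (T y) ∂(u k : Measure X) := by
        simp only [mp, ProbabilityMeasure.toMeasure_map]
        exact integral_map hT.measurable.aemeasurable
          f.continuous.measurable.aestronglyMeasurable
      rw [e1]
      have e2 := empMeas_integral T (N (k+1)) (x (k+1)) (f.compContinuous ⟨T, hT⟩)
      have e3 := empMeas_integral T (N (k+1)) (x (k+1)) f
      simp only [u, ProbabilityMeasure.coe_mk]
      rw [e3]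
      refine e2.trans ?_
      rw [← add_div]
      congr 1
      simp only [BoundedContinuousFunction.compContinuous_apply, ContinuousMap.coe_mk,
        ← Function.iterate_succ_apply' T]
      have e4 := Finset.sum_range_succ (fun i => f (T^[i] (x (k+1)))) (N (k+1))
      have e5 := Finset.sum_range_succ' (fun i => f (T^[i] (x (k+1)))) (N (k+1))
      simp only [Function.iterate_zero, id] at e5
      linarith
    simp only [h3]
    rw [show (∫ y, f y ∂(μ : Measure X)) = (∫ y, f y ∂(μ : Measure X)) + 0 by simp]
    refine (ht f).add ?_
    have h4 : Tendsto (fun k : ℕ => 2 * ‖f‖ / ((k : ℝ) + 1)) F (𝓝 0) := by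
      have := (tendsto_one_div_add_atTop_nhds_zero_nat (𝕜 := ℝ)).const_mul (2 * ‖f‖)
      simp only [mul_zero, mul_one_div] at this
      exact this.mono_left hF
    refine squeeze_zero_norm (fun k => ?_) h4
    rw [norm_div]
    have hk : ((k : ℝ) + 1) ≤ N (k+1) := by exact_mod_cast hN (k+1)
    gcongr
    · have b1 := f.norm_coe_le_norm (T^[N (k+1)] (x (k+1)))
      have b2 := f.norm_coe_le_norm (x (k+1))
      exact (norm_sub_le _ _).trans (by linarith)
    · simpa using hk
  exact tendsto_nhds_unique h1 h2


open Classical in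
lemma exists_good_shift {X : Type*} [MetricSpace X] (T : X → X) (n N S : ℕ) (hn : 0 < n)
    (hS : 0 < S) (ε η : ℝ) (hη : 0 < η) (hε : 0 < ε)
    (xs : Fin S → X) (x : X)
    (hx : (1 - ε) * N < (((Finset.range N).filter (fun k => T^[k] x ∈
      ⋃ i, {y | (∑ j ∈ Finset.range n, dist (T^[j] (xs i)) (T^[j] y)) / n < ε})).card : ℝ)) :
    ∃ r : Fin n, ∃ w : ℕ → Fin S,
      (((Finset.range N).filter (fun i => η ≤ dist (T^[i] x)
        (T^[(i - r) % n] (xs (w ((i - r) / n)))))).card : ℝ) ≤ n + (ε / η + ε) * N := by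
  set G : Set X := ⋃ i, {y | (∑ j ∈ Finset.range n, dist (T^[j] (xs i)) (T^[j] y)) / n < ε} with hG
  have hc : ∀ s : ℕ, ∃ i : Fin S, T^[s] x ∈ G →
      (∑ j ∈ Finset.range n, dist (T^[j] (xs i)) (T^[j] (T^[s] x))) / n < ε := by
    intro s
    by_cases h : T^[s] x ∈ G
    · obtain ⟨i, hi⟩ := Set.mem_iUnion.1 h
      exact ⟨i, fun _ => hi⟩
    · exact ⟨⟨0, hS⟩, fun h' => absurd h' h⟩
  choose c hc using hc
  by_contra! hcon
  have hcon' : ∀ r : Fin n, (n + (ε / η + ε) * N : ℝ) < _ :=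
    fun r => hcon r (fun k => c (r + n * k))
  -- the mismatch pairs
  let P : ℕ × ℕ → Prop := fun q => η ≤ dist (T^[q.1 + q.2] x) (T^[q.2] (xs (c q.1)))
  let m : ℕ → ℕ := fun r => ((Finset.range N).filter (fun i => η ≤ dist (T^[i] x)
        (T^[(i - r) % n] (xs (c (r + n * ((i - r) / n))))))).card
  have hm : ∀ r < n, m r ≤ n + ((Finset.range N).filter (fun i => n ≤ i ∧ η ≤ dist (T^[i] x)
        (T^[(i - r) % n] (xs (c (r + n * ((i - r) / n))))))).card := by
    intro r _
    have : ((Finset.range N).filter (fun i => η ≤ dist (T^[i] x)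
        (T^[(i - r) % n] (xs (c (r + n * ((i - r) / n))))))) ⊆ Finset.range n ∪
        ((Finset.range N).filter (fun i => n ≤ i ∧ η ≤ dist (T^[i] x)
        (T^[(i - r) % n] (xs (c (r + n * ((i - r) / n))))))) := by
      intro i hi
      simp only [Finset.mem_filter, Finset.mem_union, Finset.mem_range] at hi ⊢
      by_cases h : i < n
      · exact Or.inl h
      · exact Or.inr ⟨hi.1, not_lt.1 h, hi.2⟩
    refine (Finset.card_le_card this).trans ((Finset.card_union_le _ _).trans ?_)
    simp
  have hsum : ∑ r ∈ Finset.range n, ((Finset.range N).filter (fun i => n ≤ i ∧ η ≤ dist (T^[i] x)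
        (T^[(i - r) % n] (xs (c (r + n * ((i - r) / n))))))).card ≤
        ∑ s ∈ Finset.range N, ((Finset.range n).filter (fun o => P (s, o))).card := by
    rw [← Finset.card_sigma, ← Finset.card_sigma]
    refine Finset.card_le_card_of_injOn (fun q => ⟨q.1 + n * ((q.2 - q.1) / n), (q.2 - q.1) % n⟩)
      ?_ ?_
    · rintro ⟨r, i⟩ h
      simp only [Finset.coe_sigma, Set.mem_sigma_iff, Finset.mem_coe, Finset.mem_range,
        Finset.mem_filter] at h ⊢
      obtain ⟨hr, hi, hni, hd⟩ := h
      have e := Nat.mod_add_div (i - r) n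
      have e' : r + n * ((i - r) / n) + (i - r) % n = i := by omega
      refine ⟨by omega, Nat.mod_lt _ hn, ?_⟩
      simp only [P, e']
      exact hd
    · rintro ⟨r, i⟩ h ⟨r', i'⟩ h' heq
      simp only [Finset.coe_sigma, Set.mem_sigma_iff, Finset.mem_coe, Finset.mem_range,
        Finset.mem_filter] at h h'
      simp only [Sigma.mk.injEq, heq_eq_eq] at heq
      have e := Nat.mod_add_div (i - r) n
      have e1 := Nat.mod_add_div (i' - r') n
      have f1 : (r + n * ((i - r) / n)) % n = r := by
        rw [Nat.add_mul_mod_self_left, Nat.mod_eq_of_lt h.1]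
      have f2 : (r' + n * ((i' - r') / n)) % n = r' := by
        rw [Nat.add_mul_mod_self_left, Nat.mod_eq_of_lt h'.1]
      have hr : r = r' := by rw [← f1, ← f2, heq.1]
      have hi : i = i' := by omega
      subst hr hi
      rfl
  have hblock : ∀ s ∈ Finset.range N, (((Finset.range n).filter (fun o => P (s, o))).card : ℝ) ≤
      ε / η * n + (if T^[s] x ∈ G then 0 else (n : ℝ)) := by
    intro s _
    by_cases h : T^[s] x ∈ G
    · have h1 := hc s h
      rw [div_lt_iff₀ (by exact_mod_cast hn)] at h1
      simp only [h, if_true, add_zero]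
      rw [div_mul_eq_mul_div, le_div_iff₀ hη, ← nsmul_eq_mul, ← Finset.sum_const]
      refine le_trans ?_ h1.le
      refine le_trans (Finset.sum_le_sum (g := fun j => dist (T^[j] (xs (c s))) (T^[j] (T^[s] x)))
        fun o ho => ?_) (Finset.sum_le_sum_of_subset_of_nonneg (Finset.filter_subset _ _)
        fun _ _ _ => dist_nonneg)
      have := (Finset.mem_filter.1 ho).2
      simp only [P] at this
      rw [dist_comm, ← Function.iterate_add_apply, add_comm o s]
      exact this
    · simp only [h, if_false]
      have : ((Finset.range n).filter (fun o => P (s, o))).card ≤ n :=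
        (Finset.card_filter_le _ _).trans (by simp)
      have : (((Finset.range n).filter (fun o => P (s, o))).card : ℝ) ≤ n := by exact_mod_cast this
      have : 0 ≤ ε / η * n := by positivity
      linarith
  have hbad : ∑ s ∈ Finset.range N, (if T^[s] x ∈ G then 0 else (n : ℝ)) ≤ ε * N * n := by
    have : ∑ s ∈ Finset.range N, (if T^[s] x ∈ G then 0 else (n : ℝ)) =
      (N - (((Finset.range N).filter (fun k => T^[k] x ∈ G)).card : ℝ)) * n := by
      have h0 : ∀ s, (if T^[s] x ∈ G then 0 else (n : ℝ)) =
          n - (if T^[s] x ∈ G then 1 else 0) * n := by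
        intro s; split_ifs <;> simp
      simp only [h0]
      rw [Finset.sum_sub_distrib, ← Finset.sum_mul, Finset.sum_boole]
      simp
      ring
    rw [this]
    gcongr
    linarith
  have htot : (∑ r ∈ Finset.range n, m r : ℝ) ≤ n * n + (ε / η * n * N + ε * N * n) := by
    have h1 : ∑ r ∈ Finset.range n, m r ≤ n * n +
        ∑ s ∈ Finset.range N, ((Finset.range n).filter (fun o => P (s, o))).card := by
      refine (Finset.sum_le_sum fun r hr => hm r (Finset.mem_range.1 hr)).trans ?_
      rw [Finset.sum_add_distrib]
      simp only [Finset.sum_const, Finset.card_range, smul_eq_mul]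
      omega
    have h2 : (∑ s ∈ Finset.range N, (((Finset.range n).filter (fun o => P (s, o))).card : ℝ)) ≤
        ε / η * n * N + ε * N * n := by
      refine (Finset.sum_le_sum hblock).trans ?_
      rw [Finset.sum_add_distrib]
      simp only [Finset.sum_const, Finset.card_range, nsmul_eq_mul]
      linarith
    have h1' : (∑ r ∈ Finset.range n, m r : ℝ) ≤ n * n +
        ∑ s ∈ Finset.range N, (((Finset.range n).filter (fun o => P (s, o))).card : ℝ) := by
      exact_mod_cast h1
    linarith
  have hlow : (∑ r ∈ Finset.range n, (n + (ε / η + ε) * N : ℝ)) < ∑ r ∈ Finset.range n, (m r : ℝ) := by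
    refine Finset.sum_lt_sum_of_nonempty ⟨0, Finset.mem_range.2 hn⟩ fun r hr => ?_
    exact hcon' ⟨r, Finset.mem_range.1 hr⟩
  simp only [Finset.sum_const, Finset.card_range, nsmul_eq_mul] at hlow
  nlinarith


open Classical in
lemma hamming_count (N K : ℕ) (κ t : ℝ) (ht : 0 < t) (ht1 : t ≤ 1) :
    (((Finset.univ : Finset (Fin N → Option (Fin K))).filter (fun f =>
      ((Finset.univ.filter (fun i => f i ≠ none)).card : ℝ) ≤ κ * N)).card : ℝ)
      ≤ Real.exp (N * (κ * Real.log (1 / t) + K * t)) := by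
  set A := (Finset.univ : Finset (Fin N → Option (Fin K))).filter (fun f =>
      ((Finset.univ.filter (fun i => f i ≠ none)).card : ℝ) ≤ κ * N)
  let g : Option (Fin K) → ℝ := fun o => if o ≠ none then t else 1
  have hg : ∀ o, 0 ≤ g o := by intro o; simp only [g]; split_ifs <;> positivity
  have h1 : ∑ f : Fin N → Option (Fin K), ∏ i, g (f i) = (1 + K * t) ^ N := by
    have := Finset.prod_univ_sum (fun _ : Fin N => (Finset.univ : Finset (Option (Fin K))))
      (fun _ o => g o)
    rw [Fintype.piFinset_univ] at this
    rw [← this]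
    simp [Fintype.sum_option, g]
  have h2 : ∀ f ∈ A, Real.exp (-(N * (κ * Real.log (1 / t)))) ≤ ∏ i, g (f i) := by
    intro f hf
    have hf' := (Finset.mem_filter.1 hf).2
    simp only [g]
    rw [Finset.prod_ite]
    simp only [Finset.prod_const, mul_one, one_pow]
    rw [← Real.rpow_natCast, Real.rpow_def_of_pos ht, Real.exp_le_exp]
    rw [one_div, Real.log_inv]
    have := Real.log_nonpos ht.le ht1
    nlinarith
  have h3 : (A.card : ℝ) * Real.exp (-(N * (κ * Real.log (1 / t)))) ≤ (1 + K * t) ^ N := by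
    rw [← h1, ← nsmul_eq_mul, ← Finset.sum_const]
    refine (Finset.sum_le_sum h2).trans ?_
    exact Finset.sum_le_sum_of_subset_of_nonneg (Finset.subset_univ _)
      fun f _ _ => Finset.prod_nonneg fun i _ => hg _
  have h4 : (1 + K * t) ^ N ≤ Real.exp (N * (K * t)) := by
    rw [Real.exp_nat_mul]
    gcongr
    linarith [Real.add_one_le_exp (K * t)]
  have h5 := h3.trans h4
  rw [Real.exp_neg, ← div_eq_mul_inv, div_le_iff₀ (Real.exp_pos _), ← Real.exp_add] at h5
  refine h5.trans (le_of_eq ?_)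
  congr 1
  ring

open Classical in
lemma coverMincard_le_of_codes {X : Type*} [MetricSpace X] (T : X → X) (N K : ℕ) (η κ t : ℝ)
    (ht : 0 < t) (ht1 : t ≤ 1) (y : Fin K → X) (hy : ∀ x, ∃ i, dist x (y i) < η)
    {I : Type*} [Fintype I] (z : I → ℕ → X)
    (hz : ∀ x, ∃ i, (((Finset.range N).filter (fun k => η ≤ dist (T^[k] x) (z i k))).card : ℝ)
      ≤ κ * N) :
    ∃ m : ℕ, Dynamics.coverMincard T Set.univ {p : X × X | dist p.1 p.2 < 2 * η} N ≤ m ∧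
      (m : ℝ) ≤ Fintype.card I * Real.exp (N * (κ * Real.log (1 / t) + K * t)) := by
  choose c hc using hy
  choose i hi using hz
  let A := (Finset.univ : Finset (Fin N → Option (Fin K))).filter (fun f =>
      ((Finset.univ.filter (fun i => f i ≠ none)).card : ℝ) ≤ κ * N)
  let f : X → Fin N → Option (Fin K) := fun x k =>
    if η ≤ dist (T^[k] x) (z (i x) k) then some (c (T^[k] x)) else none
  have hf : ∀ x, f x ∈ A := by
    intro x
    simp only [A, Finset.mem_filter, Finset.mem_univ, true_and]
    refine le_trans ?_ (hi x)
    have : (Finset.univ.filter (fun k => f x k ≠ none)).card ≤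
      ((Finset.range N).filter (fun k => η ≤ dist (T^[k] x) (z (i x) k))).card := by
      refine Finset.card_le_card_of_injOn (fun k => (k : ℕ)) ?_ (fun a _ b _ h => Fin.ext h)
      intro k hk
      simp only [f, ne_eq, Finset.coe_filter, Finset.mem_univ, true_and, Set.mem_ofPred_eq] at hk
      simp only [Finset.coe_filter, Finset.mem_range, Set.mem_ofPred_eq]
      refine ⟨k.2, ?_⟩
      by_contra h
      simp [h] at hk
    exact_mod_cast this
  let code : X → I × (Fin N → Option (Fin K)) := fun x => (i x, f x)
  let C : Finset (I × (Fin N → Option (Fin K))) :=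
    ((Finset.univ : Finset I) ×ˢ A).filter (fun q => ∃ x, code x = q)
  have hC : ∀ q : C, ∃ x, code x = q.1 := fun q => (Finset.mem_filter.1 q.2).2
  choose rep hrep using hC
  let s : Finset X := Finset.univ.image rep
  have hs : Dynamics.IsDynCoverOf T Set.univ {p : X × X | dist p.1 p.2 < 2 * η} N s := by
    intro x _
    have hx : code x ∈ C := Finset.mem_filter.2 ⟨Finset.mem_product.2 ⟨Finset.mem_univ _, hf x⟩,
      x, rfl⟩
    refine ⟨rep ⟨code x, hx⟩, by simp [s], ?_⟩
    have hr := hrep ⟨code x, hx⟩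
    set x' := rep ⟨code x, hx⟩
    have hr1 : i x' = i x := congrArg Prod.fst hr
    have hr2 : f x' = f x := congrArg Prod.snd hr
    rw [Dynamics.mem_dynEntourage]
    intro k hk
    have hr3 := congrFun hr2 ⟨k, hk⟩
    simp only [f, hr1] at hr3
    show dist (T^[k] x) (T^[k] x') < 2 * η
    by_cases h1 : η ≤ dist (T^[k] x) (z (i x) k) <;>
      by_cases h2 : η ≤ dist (T^[k] x') (z (i x) k) <;> simp [h1, h2] at hr3
    · have e1 := hc (T^[k] x)
      have e2 := hc (T^[k] x')
      rw [hr3] at e2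
      linarith [dist_triangle_right (T^[k] x) (T^[k] x') (y (c (T^[k] x)))]
    · push Not at h1 h2
      linarith [dist_triangle_right (T^[k] x) (T^[k] x') (z (i x) k)]
  refine ⟨s.card, hs.coverMincard_le_card, ?_⟩
  have h1 : s.card ≤ Fintype.card I * A.card := by
    calc s.card ≤ (Finset.univ : Finset C).card := Finset.card_image_le
      _ = C.card := by simp
      _ ≤ ((Finset.univ : Finset I) ×ˢ A).card := Finset.card_filter_le _ _
      _ = _ := by simp
  calc (s.card : ℝ) ≤ Fintype.card I * A.card := by exact_mod_cast h1
    _ ≤ _ := by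
      gcongr
      exact hamming_count N K κ t ht ht1

lemma measureComplexity_cover {X : Type*} [MetricSpace X] (T : X → X) (n : ℕ) (hn : 0 < n) (ε : ℝ)
    (s : Finset X)
    (hs : Dynamics.IsDynCoverOf T Set.univ {p : X × X | dist p.1 p.2 < ε} n s) :
    ∃ xs : Fin s.card → X, (⋃ i, {y | dbar T n (xs i) y < ε}) = Set.univ := by
  refine ⟨fun i => (s.equivFin.symm i : X), ?_⟩
  refine Set.eq_univ_of_forall fun x => ?_
  obtain ⟨y, hy, hxy⟩ := hs (Set.mem_univ x)
  rw [Dynamics.mem_dynEntourage] at hxy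
  refine Set.mem_iUnion.2 ⟨s.equivFin ⟨y, hy⟩, ?_⟩
  simp only [Equiv.symm_apply_apply]
  show dbar T n y x < ε
  rw [dbar, div_lt_iff₀ (by exact_mod_cast hn)]
  calc ∑ i ∈ Finset.range n, dist (T^[i] y) (T^[i] x) < ∑ i ∈ Finset.range n, ε := by
        refine Finset.sum_lt_sum_of_nonempty ⟨0, Finset.mem_range.2 hn⟩ fun i hi => ?_
        rw [dist_comm]
        exact hxy i (Finset.mem_range.1 hi)
    _ = ε * n := by simp [mul_comm]

lemma measureComplexity_mem {X : Type*} [MetricSpace X] [MeasurableSpace X]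
    (T : X → X) (ρ : Measure X) [IsProbabilityMeasure ρ] (n : ℕ) (hn : 0 < n) (ε : ℝ) (hε : 0 < ε)
    (s : Finset X)
    (hs : Dynamics.IsDynCoverOf T Set.univ {p : X × X | dist p.1 p.2 < ε} n s) :
    s.card ∈ {m : ℕ | ∃ xs : Fin m → X,
      1 - ε < (ρ (⋃ i, {y | dbar T n (xs i) y < ε})).toReal} := by
  obtain ⟨xs, hxs⟩ := measureComplexity_cover T n hn ε s hs
  exact ⟨xs, by rw [hxs]; simp [hε]⟩

lemma limsup_measureComplexity_le {X : Type*} [MetricSpace X] [CompactSpace X] [MeasurableSpace X]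
    (T : X → X) (hT : Continuous T) (ρ : Measure X) [IsProbabilityMeasure ρ] (ε : ℝ) (hε : 0 < ε) :
    Filter.atTop.limsup
      (fun n : ℕ => ((Real.log (measureComplexity T ρ n ε) / n : ℝ) : EReal)) ≤
      Dynamics.coverEntropy T Set.univ := by
  have hU : {p : X × X | dist p.1 p.2 < ε} ∈ uniformity X := Metric.dist_mem_uniformity hε
  refine le_trans ?_ (Dynamics.coverEntropyEntourage_le_coverEntropy T Set.univ hU)
  have hne : (Set.univ : Set X).Nonempty := by
    have : (ρ Set.univ) ≠ 0 := by simp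
    exact nonempty_of_measure_ne_zero this
  rw [Dynamics.coverEntropyEntourage, ExpGrowth.expGrowthSup_def]
  refine limsup_le_limsup ?_
  filter_upwards [eventually_gt_atTop 0] with n hn
  have hfin := Dynamics.coverMincard_finite_of_isCompact_invariant (T := T) isCompact_univ
    (Set.mapsTo_univ _ _) hU n
  obtain ⟨s, hs, hcard⟩ := (Dynamics.coverMincard_finite_iff T Set.univ _ n).1 hfin
  have hS : measureComplexity T ρ n ε ≤ s.card :=
    Nat.sInf_le (measureComplexity_mem T ρ n hn ε hε s hs)
  have hs1 : 0 < s.card := Finset.card_pos.2 (by simpa using hs.nonempty hne)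
  simp only [Function.comp_apply]
  rw [← hcard]
  have e : ENNReal.log (((s.card : ℕ∞)) : ℝ≥0∞) = ((Real.log s.card : ℝ) : EReal) := by
    rw [ENat.toENNReal_coe, ← ENNReal.ofReal_natCast, ENNReal.log_ofReal_of_pos (by exact_mod_cast hs1)]
  rw [e, EReal.coe_div]
  have hl : Real.log (measureComplexity T ρ n ε) ≤ Real.log s.card := by
    rcases Nat.eq_zero_or_pos (measureComplexity T ρ n ε) with h0 | h0
    · rw [h0]; simpa using Real.log_natCast_nonneg s.card
    · exact Real.log_le_log (by exact_mod_cast h0) (by exact_mod_cast hS)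
  exact EReal.div_le_div_right_of_nonneg (by positivity) (by exact_mod_cast hl)

lemma isOpen_dbar_ball {X : Type*} [MetricSpace X] (T : X → X) (hT : Continuous T) (n : ℕ) (ε : ℝ)
    (x : X) : IsOpen {y | dbar T n x y < ε} := by
  refine isOpen_lt ?_ continuous_const
  unfold dbar
  refine Continuous.div_const ?_ _
  exact continuous_finsetSum _ fun i _ => continuous_const.dist (hT.iterate i)

lemma coverEntropy_le_of_liminf {X : Type*} [MetricSpace X] [CompactSpace X] [MeasurableSpace X]
    [BorelSpace X] (T : X → X) (hT : Continuous T) (α : ℝ)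
    (h : ∀ ρ : Measure X, IsProbabilityMeasure ρ → MeasurePreserving T ρ ρ → ∀ ε : ℝ, 0 < ε →
      Filter.atTop.liminf
        (fun n : ℕ => ((Real.log (measureComplexity T ρ n ε) / n : ℝ) : EReal)) < α) :
    Dynamics.coverEntropy T Set.univ ≤ α := by
  rw [Dynamics.coverEntropy_eq_iSup_basis Metric.uniformity_basis_dist]
  refine iSup₂_le fun δ hδ => ?_
  rw [← EReal.le_of_forall_lt_iff_le]
  intro β hβ
  have hβ : α < β := by exact_mod_cast hβ
  -- parameters
  set η : ℝ := δ / 2 with hηdef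
  have hη : 0 < η := by positivity
  have hδη : δ = 2 * η := by rw [hηdef]; ring
  obtain ⟨F, -, hFfin, hF⟩ := finite_cover_balls_of_compact (isCompact_univ (X := X)) hη
  obtain ⟨K, y, hy⟩ : ∃ K : ℕ, ∃ y : Fin K → X, ∀ x, ∃ i, dist x (y i) < η := by
    refine ⟨hFfin.toFinset.card, fun i => (hFfin.toFinset.equivFin.symm i : X), fun x => ?_⟩
    have hx := hF (Set.mem_univ x)
    simp only [Set.mem_iUnion] at hx
    obtain ⟨p, hp, hxp⟩ := hx
    refine ⟨hFfin.toFinset.equivFin ⟨p, by simpa using hp⟩, ?_⟩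
    simpa using hxp
  obtain ⟨t, ht, ht1, hKt⟩ : ∃ t : ℝ, 0 < t ∧ t ≤ 1 ∧ K * t ≤ (β - α) / 2 := by
    have hg : 0 < (β - α) / 2 := by linarith
    refine ⟨min 1 ((β - α) / 2 / (K + 1)), by positivity, min_le_left _ _, ?_⟩
    calc (K : ℝ) * min 1 ((β - α) / 2 / (K + 1)) ≤ (K + 1) * ((β - α) / 2 / (K + 1)) := by
          gcongr
          · linarith
          · exact min_le_right _ _
      _ = _ := by field_simp
  have hlog : 0 ≤ Real.log (1 / t) := Real.log_nonneg (by rw [le_div_iff₀ ht]; linarith)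
  obtain ⟨κ, hκ, hκl⟩ : ∃ κ : ℝ, 0 < κ ∧ κ * Real.log (1 / t) ≤ (β - α) / 2 := by
    have hg : 0 < (β - α) / 2 := by linarith
    refine ⟨(β - α) / 2 / (Real.log (1 / t) + 1), by positivity, ?_⟩
    rw [div_mul_eq_mul_div, div_le_iff₀ (by positivity)]
    nlinarith
  obtain ⟨ε, hε, hε1, hεκ⟩ : ∃ ε : ℝ, 0 < ε ∧ ε < 1 ∧ ε / η + ε ≤ κ / 2 := by
    refine ⟨min (1 / 2) (κ / 2 / (1 / η + 1)), by positivity,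
      lt_of_le_of_lt (min_le_left _ _) (by norm_num), ?_⟩
    calc min (1 / 2) (κ / 2 / (1 / η + 1)) / η + min (1 / 2) (κ / 2 / (1 / η + 1))
        = min (1 / 2) (κ / 2 / (1 / η + 1)) * (1 / η + 1) := by ring
      _ ≤ (κ / 2 / (1 / η + 1)) * (1 / η + 1) := by gcongr; exact min_le_right _ _
      _ = _ := by field_simp
  -- choose times and centers for each invariant measure
  let ι := {ρ : Measure X // IsProbabilityMeasure ρ ∧ MeasurePreserving T ρ ρ}
  have hch : ∀ ρ : ι, ∃ n : ℕ, 0 < n ∧ ∃ S : ℕ, 0 < S ∧ Real.log S < α * n ∧ ∃ xs : Fin S → X,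
      1 - ε < (ρ.1 (⋃ i, {y | dbar T n (xs i) y < ε})).toReal := by
    rintro ⟨ρ, hρ, hinv⟩
    have h1 := (frequently_lt_of_liminf_lt (by isBoundedDefault) (h ρ hρ hinv ε hε)).and_eventually
      (eventually_gt_atTop 0)
    obtain ⟨n, hlt, hn⟩ := h1.exists
    have hlt : Real.log (measureComplexity T ρ n ε) / n < α := by exact_mod_cast hlt
    rw [div_lt_iff₀ (by exact_mod_cast hn)] at hlt
    obtain ⟨s, hs⟩ := Dynamics.exists_isDynCoverOf_of_isCompact_invariant (T := T)
      (isCompact_univ (X := X)) (Set.mapsTo_univ _ _) (Metric.dist_mem_uniformity hε) n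
    have hmem := Nat.sInf_mem (⟨_, measureComplexity_mem T ρ n hn ε hε s hs⟩ : Set.Nonempty _)
    refine ⟨n, hn, measureComplexity T ρ n ε, ?_, hlt, hmem⟩
    rw [Nat.pos_iff_ne_zero]
    intro h0
    obtain ⟨xs, hxs⟩ := hmem
    have : IsEmpty (Fin (measureComplexity T ρ n ε)) := by rw [h0]; infer_instance
    have : (⋃ i, {y | dbar T n (xs i) y < ε}) = ∅ :=
      @Set.iUnion_of_empty _ _ this _
    rw [this] at hxs
    simp at hxs
    linarith
  choose n hn S hS hlt xs hxs using hch
  classical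
  obtain ⟨s, N0, hN0⟩ := empMeas_finite_cover T hT
    (fun ρ : ι => ⋃ i, {y | dbar T (n ρ) (xs ρ i) y < ε})
    (fun ρ => isOpen_iUnion fun i => isOpen_dbar_ball T hT _ _ _) (1 - ε)
    (fun μ h1 h2 => ⟨⟨μ, h1, h2⟩, hxs ⟨μ, h1, h2⟩⟩)
  -- constant
  let C : ℝ := ∑ j ∈ s, n j * Real.exp (α * n j)
  have hC : 0 ≤ C := Finset.sum_nonneg fun j _ => by positivity
  have hlarge : ∀ᶠ N : ℕ in atTop, ∀ j ∈ s, (n j : ℝ) ≤ κ / 2 * N := by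
    rw [Filter.eventually_all_finset]
    intro j _
    exact (tendsto_natCast_atTop_atTop.const_mul_atTop (by positivity : 0 < κ / 2)).eventually_ge_atTop _
  have hmain : ∀ᶠ N : ℕ in atTop,
      ((Dynamics.coverMincard T Set.univ {p : X × X | dist p.1 p.2 < δ} N : ℕ∞) : ℝ≥0∞) ≤
        ENNReal.ofReal C * EReal.exp ((β : EReal) * N) := by
    filter_upwards [hlarge, eventually_ge_atTop N0] with N hNl hN
    let I := Σ j : s, Fin (n j) × (Fin (N / n j + 1) → Fin (S j))
    let z : I → ℕ → X := fun q i =>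
      T^[(i - (q.2.1 : ℕ)) % n q.1] (xs q.1 (q.2.2 (Fin.ofNat _ ((i - (q.2.1 : ℕ)) / n q.1))))
    obtain ⟨m, hm, hmle⟩ := coverMincard_le_of_codes T N K η κ t ht ht1 y hy z (by
      intro x
      obtain ⟨j, hj, hjx⟩ := hN0 N hN x
      obtain ⟨r, w, hrw⟩ := exists_good_shift T (n j) N (S j) (hn j) (hS j) ε η hη hε (xs j) x hjx
      refine ⟨⟨⟨j, hj⟩, r, fun k => w k⟩, ?_⟩
      have hle : (n j : ℝ) + (ε / η + ε) * N ≤ κ * N := by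
        have a1 := hNl j hj
        have a2 : (ε / η + ε) * N ≤ κ / 2 * N := by gcongr
        linarith
      refine le_trans (le_of_eq ?_) (hrw.trans hle)
      congr 2
      refine Finset.filter_congr fun i hi => ?_
      have hi' := Finset.mem_range.1 hi
      have hlt' : (i - (r : ℕ)) / n j < N / n j + 1 :=
        Nat.lt_succ_of_le (Nat.div_le_div_right (by omega))
      simp only [z, Fin.val_ofNat, Nat.mod_eq_of_lt hlt'])
    rw [← hδη] at hm
    have hcard : (Fintype.card I : ℝ) ≤ C * Real.exp (α * N) := by
      have e1 : (Fintype.card I : ℝ) = ∑ j ∈ s, (n j : ℝ) * (S j : ℝ) ^ (N / n j + 1) := by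
        simp only [I, Fintype.card_sigma, Fintype.card_prod, Fintype.card_fin, Fintype.card_fun]
        push_cast
        exact Finset.sum_coe_sort s (fun j => (n j : ℝ) * (S j : ℝ) ^ (N / n j + 1))
      rw [e1, Finset.sum_mul]
      refine Finset.sum_le_sum fun j _ => ?_
      rw [mul_assoc, ← Real.exp_add]
      gcongr
      have hSpos : (0 : ℝ) < S j := by exact_mod_cast hS j
      rw [← Real.log_le_iff_le_exp (by positivity), Real.log_pow]
      have hnpos : (0 : ℝ) < n j := by exact_mod_cast hn j
      have hl0 : 0 ≤ Real.log (S j) := Real.log_natCast_nonneg _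
      have hα : 0 < α := by
        by_contra hα
        push Not at hα
        have := hlt j
        nlinarith
      have hk : ((N / n j + 1 : ℕ) : ℝ) * n j ≤ N + n j := by
        have : (N / n j + 1) * n j ≤ N + n j := by
          rw [add_mul, one_mul]; gcongr; exact Nat.div_mul_le_self _ _
        exact_mod_cast this
      calc ((N / n j + 1 : ℕ) : ℝ) * Real.log (S j) ≤ ((N / n j + 1 : ℕ) : ℝ) * (α * n j) := by
            gcongr; exact (hlt j).le
        _ = α * (((N / n j + 1 : ℕ) : ℝ) * n j) := by ring
        _ ≤ α * (N + n j) := by gcongr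
        _ = _ := by ring
    have hfin : (m : ℝ) ≤ C * Real.exp (β * N) := by
      refine hmle.trans ?_
      calc (Fintype.card I : ℝ) * Real.exp (N * (κ * Real.log (1 / t) + K * t))
          ≤ (C * Real.exp (α * N)) * Real.exp (N * (β - α)) := by
            gcongr
            linarith
        _ = _ := by
            rw [mul_assoc, ← Real.exp_add]
            congr 2
            ring
    have hb : EReal.exp ((β : EReal) * N) = ENNReal.ofReal (Real.exp (β * N)) := by
      rw [← EReal.exp_coe]
      norm_cast
    rw [hb, ← ENNReal.ofReal_mul hC]
    calc ((Dynamics.coverMincard T Set.univ {p : X × X | dist p.1 p.2 < δ} N : ℕ∞) : ℝ≥0∞)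
        ≤ ((m : ℕ∞) : ℝ≥0∞) := ENat.toENNReal_le.2 hm
      _ = ENNReal.ofReal (m : ℝ) := by simp
      _ ≤ _ := ENNReal.ofReal_le_ofReal hfin
  have := ExpGrowth.expGrowthSup_le_of_eventually_le ENNReal.ofReal_ne_top hmain
  rw [ExpGrowth.expGrowthSup_exp] at this
  exact this

/-- The variational principle for measure complexity: taking the supremum over all invariant
Borel probability measures of `lim_{ε→0} limsup_n (1/n) log S_n(d,ρ,ε)` (resp. with `liminf`)
recovers the topological entropy. Since `(1/n) log S_n(d,ρ,ε)` is nonincreasing in `ε`, the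
limit as `ε → 0` is the supremum over `ε > 0`. -/
theorem variational_principle_measureComplexity
    {X : Type*} [MetricSpace X] [CompactSpace X] [MeasurableSpace X] [BorelSpace X]
    (T : X ≃ₜ X) :
    (⨆ ρ : {ρ : Measure X // IsProbabilityMeasure ρ ∧ MeasurePreserving (T : X → X) ρ ρ},
        ⨆ ε : ℝ, ⨆ _ : 0 < ε, Filter.atTop.limsup
          (fun n : ℕ => ((Real.log (measureComplexity (T : X → X) ρ.1 n ε) / n : ℝ) : EReal)))
      = Dynamics.coverEntropy (T : X → X) Set.univ
    ∧
    (⨆ ρ : {ρ : Measure X // IsProbabilityMeasure ρ ∧ MeasurePreserving (T : X → X) ρ ρ},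
        ⨆ ε : ℝ, ⨆ _ : 0 < ε, Filter.atTop.liminf
          (fun n : ℕ => ((Real.log (measureComplexity (T : X → X) ρ.1 n ε) / n : ℝ) : EReal)))
      = Dynamics.coverEntropy (T : X → X) Set.univ := by
  have hup : (⨆ ρ : {ρ : Measure X // IsProbabilityMeasure ρ ∧ MeasurePreserving (T : X → X) ρ ρ},
        ⨆ ε : ℝ, ⨆ _ : 0 < ε, Filter.atTop.limsup
          (fun n : ℕ => ((Real.log (measureComplexity (T : X → X) ρ.1 n ε) / n : ℝ) : EReal)))
      ≤ Dynamics.coverEntropy (T : X → X) Set.univ := by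
    refine iSup_le fun ρ => iSup₂_le fun ε hε => ?_
    have := ρ.2.1
    exact limsup_measureComplexity_le T T.continuous ρ.1 ε hε
  have hmid : (⨆ ρ : {ρ : Measure X // IsProbabilityMeasure ρ ∧ MeasurePreserving (T : X → X) ρ ρ},
        ⨆ ε : ℝ, ⨆ _ : 0 < ε, Filter.atTop.liminf
          (fun n : ℕ => ((Real.log (measureComplexity (T : X → X) ρ.1 n ε) / n : ℝ) : EReal))) ≤
      (⨆ ρ : {ρ : Measure X // IsProbabilityMeasure ρ ∧ MeasurePreserving (T : X → X) ρ ρ},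
        ⨆ ε : ℝ, ⨆ _ : 0 < ε, Filter.atTop.limsup
          (fun n : ℕ => ((Real.log (measureComplexity (T : X → X) ρ.1 n ε) / n : ℝ) : EReal))) :=
    iSup_mono fun ρ => iSup₂_mono fun ε _ => liminf_le_limsup
  have hlow : Dynamics.coverEntropy (T : X → X) Set.univ ≤
      (⨆ ρ : {ρ : Measure X // IsProbabilityMeasure ρ ∧ MeasurePreserving (T : X → X) ρ ρ},
        ⨆ ε : ℝ, ⨆ _ : 0 < ε, Filter.atTop.liminf
          (fun n : ℕ => ((Real.log (measureComplexity (T : X → X) ρ.1 n ε) / n : ℝ) : EReal))) := by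
    rw [← EReal.le_of_forall_lt_iff_le]
    intro α hα
    refine coverEntropy_le_of_liminf T T.continuous α fun ρ h1 h2 ε hε => ?_
    refine lt_of_le_of_lt ?_ hα
    exact le_iSup_of_le ⟨ρ, h1, h2⟩ (le_iSup₂_of_le ε hε le_rfl)
  exact ⟨le_antisymm hup (hlow.trans hmid), le_antisymm (hmid.trans hup) hlow⟩
end

section
/- Let (X,T) be a topological dynamical system and ρ a T-invariant Borel probability measure on X. If ρ has discrete spectrum, then the measure complexity of (X,T,ρ) is sub-polynomial. -/
open MeasureTheory Filter

/-- Kernel `D` has bounded averaged complexity. -/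
def BddCx {X : Type*} [MeasurableSpace X] (T : X → X) (ρ : Measure X) (D : X → X → ℝ) : Prop :=
  ∀ ε > (0 : ℝ), ∃ m : ℕ, ∀ n : ℕ, ∃ A : Fin m → Set X,
    ρ (⋃ i, A i)ᶜ ≤ ENNReal.ofReal ε ∧
    ∀ i, ∀ x ∈ A i, ∀ y ∈ A i, ∑ k ∈ Finset.range n, D (T^[k] x) (T^[k] y) ≤ ε * n

section
variable {X : Type*} [MeasurableSpace X] {T : X → X} {ρ : Measure X}

lemma BddCx.mono {D E : X → X → ℝ} (h : BddCx T ρ E) (hDE : ∀ x y, D x y ≤ E x y) :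
    BddCx T ρ D := by
  intro ε hε
  obtain ⟨m, hm⟩ := h ε hε
  refine ⟨m, fun n => ?_⟩
  obtain ⟨A, h1, h2⟩ := hm n
  exact ⟨A, h1, fun i x hx y hy => (Finset.sum_le_sum fun k _ => hDE _ _).trans (h2 i x hx y hy)⟩

lemma BddCx.zero : BddCx T ρ (fun _ _ => 0) := by
  intro ε hε
  refine ⟨1, fun n => ⟨fun _ => Set.univ, by simp [Set.iUnion_const], fun i x _ y _ => ?_⟩⟩
  simp; positivity

lemma BddCx.add {D E : X → X → ℝ} (hD : BddCx T ρ D) (hE : BddCx T ρ E) :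
    BddCx T ρ (fun x y => D x y + E x y) := by
  intro ε hε
  obtain ⟨m, hm⟩ := hD (ε / 2) (by positivity)
  obtain ⟨l, hl⟩ := hE (ε / 2) (by positivity)
  refine ⟨m * l, fun n => ?_⟩
  obtain ⟨A, h1, h2⟩ := hm n
  obtain ⟨B, h3, h4⟩ := hl n
  refine ⟨fun i => A (finProdFinEquiv.symm i).1 ∩ B (finProdFinEquiv.symm i).2, ?_, ?_⟩
  · have hsub : (⋃ i, A (finProdFinEquiv.symm i).1 ∩ B (finProdFinEquiv.symm i).2)ᶜ
        ⊆ (⋃ i, A i)ᶜ ∪ (⋃ i, B i)ᶜ := by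
      intro x hx
      by_contra hcon
      simp only [Set.mem_union, not_or, Set.mem_compl_iff, not_not, Set.mem_iUnion] at hcon
      obtain ⟨⟨i, hi⟩, ⟨j, hj⟩⟩ := hcon
      apply hx
      simp only [Set.mem_iUnion]
      exact ⟨finProdFinEquiv (i, j), by simpa using ⟨hi, hj⟩⟩
    calc _ ≤ _ := measure_mono hsub
      _ ≤ _ := measure_union_le _ _
      _ ≤ ENNReal.ofReal (ε / 2) + ENNReal.ofReal (ε / 2) := add_le_add h1 h3
      _ = ENNReal.ofReal ε := by
        rw [← ENNReal.ofReal_add (by positivity) (by positivity), add_halves]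
  · intro i x hx y hy
    rw [Finset.sum_add_distrib]
    have := h2 _ x hx.1 y hy.1
    have := h4 _ x hx.2 y hy.2
    linarith

lemma BddCx.smul {D : X → X → ℝ} (hD : BddCx T ρ D) {c : ℝ} (hc : 0 ≤ c) :
    BddCx T ρ (fun x y => c * D x y) := by
  intro ε hε
  obtain ⟨m, hm⟩ := hD (ε / (c + 1)) (by positivity)
  obtain ⟨l, hl⟩ := hD (min ε (ε / (c + 1))) (by positivity)
  refine ⟨l, fun n => ?_⟩
  obtain ⟨A, h1, h2⟩ := hl n
  refine ⟨A, h1.trans (ENNReal.ofReal_le_ofReal (min_le_left _ _)), fun i x hx y hy => ?_⟩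
  rw [← Finset.mul_sum]
  have h3 := h2 i x hx y hy
  have hn : (0 : ℝ) ≤ n := n.cast_nonneg
  calc _ ≤ c * (min ε (ε / (c + 1)) * n) := by gcongr
    _ ≤ c * ((ε / (c + 1)) * n) := by gcongr; exact min_le_right _ _
    _ = (c / (c + 1)) * (ε * n) := by ring
    _ ≤ 1 * (ε * n) := by
      gcongr
      rw [div_le_one (by positivity)]; linarith
    _ = _ := by ring

lemma BddCx.sum {ι : Type*} (s : Finset ι) {D : ι → X → X → ℝ} (hD : ∀ i, BddCx T ρ (D i)) :
    BddCx T ρ (fun x y => ∑ i ∈ s, D i x y) := by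
  classical
  induction s using Finset.induction_on with
  | empty => simpa using BddCx.zero
  | insert a s ha ih => simpa [Finset.sum_insert ha] using (hD a).add ih

lemma BddCx.limit (hT : MeasurePreserving T ρ ρ) {f : X → ℂ}
    (H : ∀ δ > (0 : ℝ), ∃ h : X → ℂ, AEStronglyMeasurable (fun x => f x - h x) ρ ∧
      ∫⁻ x, ENNReal.ofReal ‖f x - h x‖ ∂ρ ≤ ENNReal.ofReal δ ∧
      BddCx T ρ (fun x y => ‖h x - h y‖)) :
    BddCx T ρ (fun x y => ‖f x - f y‖) := by
  intro ε hε
  obtain ⟨h, hmeas, hint, hb⟩ := H (ε / 4 * (ε / 4)) (by positivity)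
  obtain ⟨m, hm⟩ := hb (ε / 4) (by positivity)
  refine ⟨m, fun n => ?_⟩
  obtain ⟨A, h1, h2⟩ := hm n
  set F : X → ENNReal := fun x => ENNReal.ofReal ‖f x - h x‖ with hF
  have hFm : AEMeasurable F ρ := hmeas.norm.aemeasurable.ennreal_ofReal
  set S : X → ENNReal := fun x => ∑ k ∈ Finset.range n, F (T^[k] x) with hS
  have hkm : ∀ k, AEMeasurable (fun x => F (T^[k] x)) ρ := fun k =>
    hFm.comp_quasiMeasurePreserving (hT.iterate k).quasiMeasurePreserving
  have hSint : ∫⁻ x, S x ∂ρ ≤ n * ENNReal.ofReal (ε / 4 * (ε / 4)) := by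
    rw [hS, lintegral_finsetSum' _ (fun k _ => hkm k)]
    calc _ = ∑ k ∈ Finset.range n, ∫⁻ x, F x ∂ρ := by
          refine Finset.sum_congr rfl fun k _ => ?_
          have hk := hT.iterate k
          rw [← lintegral_map' (f := F) (g := T^[k]) (by rw [hk.map_eq]; exact hFm) hk.aemeasurable,
            hk.map_eq]
      _ ≤ ∑ k ∈ Finset.range n, ENNReal.ofReal (ε / 4 * (ε / 4)) := Finset.sum_le_sum fun k _ => hint
      _ = _ := by simp
  set B : Set X := {x | ENNReal.ofReal (n * (ε / 4)) < S x} with hB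
  have hBm : ρ B ≤ ENNReal.ofReal (ε / 4) := by
    rcases Nat.eq_zero_or_pos n with rfl | hn
    · simp [hB, hS]
    · have hmk := mul_meas_ge_le_lintegral₀ (Finset.aemeasurable_fun_sum (Finset.range n)
        (fun k _ => hkm k)) (ENNReal.ofReal (n * (ε / 4)))
      have hn' : (0 : ℝ) < n := by exact_mod_cast hn
      have h3 : ENNReal.ofReal (n * (ε / 4)) * ρ B
          ≤ ENNReal.ofReal (n * (ε / 4)) * ENNReal.ofReal (ε / 4) := by
        have hBsub : B ⊆ {x | ENNReal.ofReal (n * (ε / 4)) ≤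
            ∑ i ∈ Finset.range n, F (T^[i] x)} := by
          intro x hx
          have hx' : ENNReal.ofReal (n * (ε / 4)) < S x := hx
          exact hx'.le
        calc ENNReal.ofReal (n * (ε / 4)) * ρ B
            ≤ ENNReal.ofReal (n * (ε / 4)) * ρ {x | ENNReal.ofReal (n * (ε / 4)) ≤
            ∑ i ∈ Finset.range n, F (T^[i] x)} := by gcongr
          _ ≤ _ := hmk
          _ ≤ n * ENNReal.ofReal (ε / 4 * (ε / 4)) := hSint
          _ = ENNReal.ofReal (n * (ε / 4)) * ENNReal.ofReal (ε / 4) := by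
            rw [← ENNReal.ofReal_natCast, ← ENNReal.ofReal_mul (by positivity),
              ← ENNReal.ofReal_mul (by positivity)]
            congr 1; ring
      exact (ENNReal.mul_le_mul_iff_right (ENNReal.ofReal_pos.2 (by positivity)).ne' ENNReal.ofReal_ne_top).1 h3
  have hgood : ∀ x, x ∉ B → ∑ k ∈ Finset.range n, ‖f (T^[k] x) - h (T^[k] x)‖ ≤ n * (ε / 4) := by
    intro x hx
    simp only [hB, Set.mem_ofPred_eq, not_lt, hS, hF] at hx
    rw [← ENNReal.ofReal_sum_of_nonneg (fun _ _ => norm_nonneg _)] at hx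
    exact (ENNReal.ofReal_le_ofReal_iff (by positivity)).1 hx
  refine ⟨fun i => A i \ B, ?_, ?_⟩
  · calc _ ≤ ρ ((⋃ i, A i)ᶜ ∪ B) := by
          apply measure_mono
          rw [← Set.iUnion_sdiff]
          intro x hx
          simp only [Set.mem_compl_iff, Set.mem_sdiff, not_and, not_not] at hx
          by_cases hxA : x ∈ ⋃ i, A i
          · exact Or.inr (hx hxA)
          · exact Or.inl hxA
      _ ≤ _ := measure_union_le _ _
      _ ≤ ENNReal.ofReal (ε / 4) + ENNReal.ofReal (ε / 4) := add_le_add h1 hBm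
      _ = ENNReal.ofReal (ε / 4 + ε / 4) := by
        rw [← ENNReal.ofReal_add (by positivity) (by positivity)]
      _ ≤ _ := ENNReal.ofReal_le_ofReal (by linarith)
  · intro i x hx y hy
    have a1 := hgood x hx.2
    have a2 := hgood y hy.2
    have a3 := h2 i x hx.1 y hy.1
    have hn : (0 : ℝ) ≤ n := n.cast_nonneg
    calc _ ≤ ∑ k ∈ Finset.range n, (‖f (T^[k] x) - h (T^[k] x)‖ + ‖f (T^[k] y) - h (T^[k] y)‖
            + ‖h (T^[k] x) - h (T^[k] y)‖) := by
          refine Finset.sum_le_sum fun k _ => ?_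
          have e : f (T^[k] x) - f (T^[k] y) = (f (T^[k] x) - h (T^[k] x))
            - (f (T^[k] y) - h (T^[k] y)) + (h (T^[k] x) - h (T^[k] y)) := by ring
          simp only [e]
          exact (norm_add_le _ _).trans (by gcongr; exact norm_sub_le _ _)
      _ ≤ _ := by
          rw [Finset.sum_add_distrib, Finset.sum_add_distrib]
          nlinarith

lemma BddCx.eigen [IsProbabilityMeasure ρ] (hT : MeasurePreserving T ρ ρ) (g : Lp ℂ 2 ρ)
    (hg : g ≠ 0) (c : ℂ) (hc : (fun x => (g : X → ℂ) (T x)) =ᵐ[ρ] fun x => c * (g : X → ℂ) x) :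
    BddCx T ρ (fun x y => ‖(g : X → ℂ) x - (g : X → ℂ) y‖) := by
  have hc1 : ‖c‖ = 1 := by
    have e1 : eLpNorm (fun x => (g : X → ℂ) (T x)) 2 ρ = eLpNorm g 2 ρ :=
      eLpNorm_comp_measurePreserving (Lp.aestronglyMeasurable g) hT
    have e2 : eLpNorm (fun x => c * (g : X → ℂ) x) 2 ρ = ‖c‖ₑ * eLpNorm g 2 ρ :=
      eLpNorm_const_smul c (g : X → ℂ) 2 ρ
    have e3 := eLpNorm_congr_ae (p := 2) hc
    rw [e1, e2] at e3
    have e4 : ‖g‖ = ‖c‖ * ‖g‖ := by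
      rw [Lp.norm_def]
      conv_lhs => rw [e3]
      simp
    have : ‖g‖ ≠ 0 := norm_ne_zero_iff.2 hg
    exact mul_right_cancel₀ this (by rw [← e4, one_mul])
  have hit : ∀ᵐ x ∂ρ, ∀ k : ℕ, (g : X → ℂ) (T^[k] x) = c ^ k * (g : X → ℂ) x := by
    have h1 : ∀ᵐ x ∂ρ, ∀ k : ℕ, (g : X → ℂ) (T (T^[k] x)) = c * (g : X → ℂ) (T^[k] x) :=
      ae_all_iff.2 fun k => (hT.iterate k).quasiMeasurePreserving.ae hc
    filter_upwards [h1] with x hx k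
    induction k with
    | zero => simp
    | succ k ih => rw [Function.iterate_succ_apply', hx, ih]; ring
  intro ε hε
  obtain ⟨d, hd⟩ := TopologicalSpace.exists_dense_seq ℂ
  have hgm : Measurable (g : X → ℂ) := (Lp.stronglyMeasurable g).measurable
  set V : ℕ → Set X := fun m => (⋃ i : Fin m, (g : X → ℂ) ⁻¹' Metric.ball (d i) (ε / 2))ᶜ with hV
  have hVm : ∀ m, MeasurableSet (V m) := fun m =>
    (MeasurableSet.iUnion fun i => hgm Metric.isOpen_ball.measurableSet).compl
  have hanti : Antitone V := by
    intro a b hab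
    apply Set.compl_subset_compl.2
    apply Set.iUnion_subset
    intro i
    exact Set.subset_iUnion_of_subset (Fin.castLE hab i) (by simp)
  have hempty : ⋂ m, V m = ∅ := by
    ext x
    simp only [Set.mem_iInter, Set.mem_empty_iff_false, iff_false, not_forall]
    obtain ⟨i, hi⟩ := hd.exists_dist_lt ((g : X → ℂ) x) (half_pos hε)
    refine ⟨i + 1, ?_⟩
    simp only [hV, Set.mem_compl_iff, not_not, Set.mem_iUnion]
    exact ⟨⟨i, by omega⟩, by simpa using hi⟩
  have ht := tendsto_measure_iInter_atTop (μ := ρ) (fun m => (hVm m).nullMeasurableSet) hanti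
    ⟨0, measure_ne_top _ _⟩
  rw [hempty, measure_empty] at ht
  obtain ⟨m, hm⟩ := (ht.eventually (Iio_mem_nhds
    (ENNReal.ofReal_pos.2 hε))).exists
  refine ⟨m, fun n => ⟨fun i => (g : X → ℂ) ⁻¹' Metric.ball (d i) (ε / 2) ∩
    {x | ∀ k : ℕ, (g : X → ℂ) (T^[k] x) = c ^ k * (g : X → ℂ) x}, ?_, ?_⟩⟩
  · rw [← Set.iUnion_inter, Set.compl_inter]
    refine (measure_union_le _ _).trans ?_
    have : ρ {x | ∀ k : ℕ, (g : X → ℂ) (T^[k] x) = c ^ k * (g : X → ℂ) x}ᶜ = 0 := hit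
    rw [this, add_zero]
    exact hm.le
  · intro i x hx y hy
    have hxy : ‖(g : X → ℂ) x - (g : X → ℂ) y‖ ≤ ε := by
      have a1 : dist ((g : X → ℂ) x) (d i) < ε / 2 := hx.1
      have a2 : dist ((g : X → ℂ) y) (d i) < ε / 2 := hy.1
      rw [← dist_eq_norm]
      have := dist_triangle_right ((g : X → ℂ) x) ((g : X → ℂ) y) (d i)
      linarith
    calc _ ≤ ∑ k ∈ Finset.range n, ε := by
          refine Finset.sum_le_sum fun k _ => ?_
          beta_reduce
          rw [hx.2 k, hy.2 k, ← mul_sub, norm_mul, norm_pow, hc1, one_pow, one_mul]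
          exact hxy
      _ = ε * n := by simp [mul_comm]

lemma BddCx.congr_ae (hT : MeasurePreserving T ρ ρ) {f h : X → ℂ}
    (hfh : f =ᵐ[ρ] h) (hb : BddCx T ρ (fun x y => ‖h x - h y‖)) :
    BddCx T ρ (fun x y => ‖f x - f y‖) := by
  have h0 : (fun x => f x - h x) =ᵐ[ρ] fun _ => 0 := by
    filter_upwards [hfh] with x hx
    simp [hx]
  refine BddCx.limit hT fun δ hδ => ⟨h, aestronglyMeasurable_const.congr h0.symm, ?_, hb⟩
  have : ∫⁻ x, ENNReal.ofReal ‖f x - h x‖ ∂ρ = 0 := by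
    rw [← lintegral_zero (μ := ρ)]
    apply lintegral_congr_ae
    filter_upwards [h0] with x hx
    simp [hx]
  rw [this]; exact zero_le

lemma BddCx.span [IsProbabilityMeasure ρ] (hT : MeasurePreserving T ρ ρ) (g : Lp ℂ 2 ρ)
    (hg : g ∈ Submodule.span ℂ {g : Lp ℂ 2 ρ | g ≠ 0 ∧ ∃ c : ℂ,
      (fun x => (g : X → ℂ) (T x)) =ᵐ[ρ] fun x => c * (g : X → ℂ) x}) :
    BddCx T ρ (fun x y => ‖(g : X → ℂ) x - (g : X → ℂ) y‖) := by
  induction hg using Submodule.span_induction with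
  | mem g hg => exact BddCx.eigen hT g hg.1 hg.2.choose hg.2.choose_spec
  | zero =>
    refine BddCx.congr_ae hT (Lp.coeFn_zero ℂ 2 ρ) ?_
    simpa using BddCx.zero
  | add a b _ _ ha hb =>
    refine BddCx.congr_ae hT (Lp.coeFn_add a b) ((ha.add hb).mono fun x y => ?_)
    rw [Pi.add_apply, Pi.add_apply, add_sub_add_comm]
    exact norm_add_le _ _
  | smul c a _ ha =>
    refine BddCx.congr_ae hT (Lp.coeFn_smul c a) ((ha.smul (norm_nonneg c)).mono fun x y => ?_)
    rw [Pi.smul_apply, Pi.smul_apply, ← smul_sub, norm_smul]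

lemma BddCx.memLp [IsProbabilityMeasure ρ] (hT : MeasurePreserving T ρ ρ)
    (hds : HasDiscreteSpectrum T ρ) {f : X → ℂ} (hf : MemLp f 2 ρ) :
    BddCx T ρ (fun x y => ‖f x - f y‖) := by
  refine BddCx.congr_ae hT hf.coeFn_toLp.symm ?_
  set u := hf.toLp f
  refine BddCx.limit hT fun δ hδ => ?_
  have hu : u ∈ closure ((Submodule.span ℂ {g : Lp ℂ 2 ρ | g ≠ 0 ∧ ∃ c : ℂ,
      (fun x => (g : X → ℂ) (T x)) =ᵐ[ρ] fun x => c * (g : X → ℂ) x} : Submodule ℂ (Lp ℂ 2 ρ)) :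
      Set (Lp ℂ 2 ρ)) := by
    rw [← Submodule.topologicalClosure_coe]
    have h := hds
    unfold HasDiscreteSpectrum at h
    rw [h]; trivial
  obtain ⟨h, hh, hd⟩ := Metric.mem_closure_iff.1 hu δ hδ
  have hm : AEStronglyMeasurable (fun x => (u : X → ℂ) x - (h : X → ℂ) x) ρ :=
    (Lp.aestronglyMeasurable u).sub (Lp.aestronglyMeasurable h)
  refine ⟨h, hm, ?_, BddCx.span hT h hh⟩
  have e : ∫⁻ x, ENNReal.ofReal ‖(u : X → ℂ) x - (h : X → ℂ) x‖ ∂ρ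
      = eLpNorm (fun x => (u : X → ℂ) x - (h : X → ℂ) x) 1 ρ := by
    rw [eLpNorm_one_eq_lintegral_enorm]
    simp_rw [ofReal_norm]
  rw [e]
  refine (eLpNorm_le_eLpNorm_of_exponent_le (q := 2) (by norm_num) hm).trans ?_
  have e2 : eLpNorm (fun x => (u : X → ℂ) x - (h : X → ℂ) x) 2 ρ = edist u h :=
    (Lp.edist_def u h).symm
  rw [e2, edist_dist]
  exact ENNReal.ofReal_le_ofReal hd.le

end

/-- If an invariant Borel probability measure has discrete spectrum, then its measure
complexity is sub-polynomial. -/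
theorem subPolynomial_complexity_of_discrete_spectrum
    {X : Type*} [MetricSpace X] [CompactSpace X] [MeasurableSpace X] [BorelSpace X]
    (T : X ≃ₜ X)
    (ρ : Measure X) (hρprob : IsProbabilityMeasure ρ)
    (hρinv : MeasurePreserving (T : X → X) ρ ρ)
    (hds : HasDiscreteSpectrum (T : X → X) ρ) :
    SubPolynomialComplexity (T : X → X) ρ := by
  intro τ hτ ε hε
  have hT := hρinv
  -- finite net
  obtain ⟨t, htf, htc⟩ := Metric.totallyBounded_iff.1
    (isCompact_univ (X := X)).totallyBounded (ε / 8) (by positivity)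
  have hD : BddCx T ρ (fun x y => ∑ p ∈ htf.toFinset,
      ‖((dist x p : ℝ) : ℂ) - ((dist y p : ℝ) : ℂ)‖) := by
    refine BddCx.sum _ fun p => BddCx.memLp hT hds (f := fun x => ((dist x p : ℝ) : ℂ)) ?_
    have hcont : Continuous fun x : X => ((dist x p : ℝ) : ℂ) := by fun_prop
    obtain ⟨C, hC⟩ := isCompact_univ.exists_bound_of_continuousOn hcont.continuousOn
    exact MemLp.of_bound (hcont.measurable.aestronglyMeasurable) C
      (Filter.Eventually.of_forall fun x => hC x trivial)
  have hdist : ∀ x y : X, dist x y ≤ ε / 4 + ∑ p ∈ htf.toFinset,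
      ‖((dist x p : ℝ) : ℂ) - ((dist y p : ℝ) : ℂ)‖ := by
    intro x y
    have hx := htc (Set.mem_univ x)
    simp only [Set.mem_iUnion, Metric.mem_ball] at hx
    obtain ⟨p, hp, hxp⟩ := hx
    have h1 : ‖((dist x p : ℝ) : ℂ) - ((dist y p : ℝ) : ℂ)‖ ≤ ∑ p ∈ htf.toFinset,
      ‖((dist x p : ℝ) : ℂ) - ((dist y p : ℝ) : ℂ)‖ :=
      Finset.single_le_sum (f := fun p => ‖((dist x p : ℝ) : ℂ) - ((dist y p : ℝ) : ℂ)‖)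
        (fun _ _ => norm_nonneg _) (by simpa using hp)
    rw [← Complex.ofReal_sub, Complex.norm_real, Real.norm_eq_abs] at h1
    have h2 := neg_abs_le (dist x p - dist y p)
    have h3 := dist_triangle_right x y p
    linarith
  obtain ⟨m, hm⟩ := hD (ε / 4) (by positivity)
  have hbound : ∀ n, measureComplexity T ρ n ε ≤ m := by
    intro n
    obtain ⟨A, h1, h2⟩ := hm n
    have hne : Nonempty X := ρ.nonempty_of_neZero
    refine Nat.sInf_le ?_
    classical
    refine ⟨fun i => if h : (A i).Nonempty then h.some else hne.some, ?_⟩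
    set xs : Fin m → X := fun i => if h : (A i).Nonempty then h.some else hne.some with hxs
    have hUo : IsOpen (⋃ i, {y | dbar T n (xs i) y < ε}) := by
      refine isOpen_iUnion fun i => ?_
      refine isOpen_lt ?_ continuous_const
      unfold dbar
      have hk : ∀ k, Continuous ((T : X → X)^[k]) := fun k => T.continuous.iterate k
      fun_prop
    have hsub : (⋃ i, A i) ⊆ ⋃ i, {y | dbar T n (xs i) y < ε} := by
      refine Set.iUnion_mono fun i y hy => ?_
      have hA : (A i).Nonempty := ⟨y, hy⟩
      have hxi : xs i ∈ A i := by
        simp only [hxs, dif_pos hA]; exact hA.some_mem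
      have h3 := h2 i _ hxi y hy
      simp only [Set.mem_ofPred_eq, dbar]
      rcases Nat.eq_zero_or_pos n with rfl | hn
      · simpa using hε
      · have hn' : (0 : ℝ) < n := by exact_mod_cast hn
        rw [div_lt_iff₀ hn']
        calc _ ≤ ∑ k ∈ Finset.range n, (ε / 4 + ∑ p ∈ htf.toFinset,
              ‖((dist (T^[k] (xs i)) p : ℝ) : ℂ) - ((dist (T^[k] y) p : ℝ) : ℂ)‖) :=
              Finset.sum_le_sum fun k _ => hdist _ _
          _ ≤ n * (ε / 4) + ε / 4 * n := by
              rw [Finset.sum_add_distrib]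
              simpa using h3
          _ < ε * n := by nlinarith
    have h4 : ρ.real (⋃ i, {y | dbar T n (xs i) y < ε})ᶜ ≤ ε / 4 := by
      refine ENNReal.toReal_le_of_le_ofReal (by positivity) ?_
      exact (measure_mono (Set.compl_subset_compl.2 hsub)).trans h1
    rw [probReal_compl_eq_one_sub hUo.measurableSet] at h4
    change 1 - ε < ρ.real _
    linarith
  apply Filter.Tendsto.liminf_eq
  have hlim : Tendsto (fun n : ℕ => (m : ℝ) / (n : ℝ) ^ τ) atTop (nhds 0) :=
    Tendsto.div_atTop tendsto_const_nhds ((tendsto_rpow_atTop hτ).comp tendsto_natCast_atTop_atTop)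
  refine squeeze_zero (fun n => by positivity) (fun n => ?_) hlim
  have := hbound n
  gcongr
end

section
/- Let α ∈ (0,1) be irrational with continued fraction convergents p_k/q_k, let τ > 0, τ₁ = 2/τ + 6, E = {k ∈ ℕ : k > 1 and q_{k+1} > q_k^{1/τ+3}}, and M = ⋃_{k∈E} {±m q_k : m = 1,…,a_k}, where a_k are the partial quotients of α. Let (c_m)_{m∈ℤ} be complex numbers such that |c_m| ≤ C|m|^{−τ₁} for all m ≠ 0 and some constant C > 0. Then the series ∑_{m ∉ M∪{0}} c_m · e(mx)/(e(mα)−1), where e(θ) = e^{2πiθ}, converges uniformly in x ∈ ℝ/ℤ to a continuous function ψ : ℝ/ℤ → ℂ. -/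
open MeasureTheory Filter Real

def auxP (a : ℕ → ℕ) : ℕ → ℤ
  | 0 => 1
  | 1 => 0
  | (n+2) => a (n+1) * auxP a (n+1) + auxP a n

def auxQ (a : ℕ → ℕ) : ℕ → ℤ
  | 0 => 0
  | 1 => 1
  | (n+2) => a (n+1) * auxQ a (n+1) + auxQ a n

theorem aux_det (a : ℕ → ℕ) (n : ℕ) :
    auxQ a (n+1) * auxP a n - auxQ a n * auxP a (n+1) = (-1)^n := by
  induction n with
  | zero => simp [auxQ, auxP]
  | succ n ih =>
    rw [auxQ, auxP, pow_succ, ← ih]; ring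

theorem aux_lower_s15 (α : ℝ) (m n q q' p p' ε : ℤ) (T T' : ℝ) (hε : ε = 1 ∨ ε = -1)
    (hdet : q' * p - q * p' = ε) (hT : T = -ε * (q * α - p)) (hT' : T' = ε * (q' * α - p'))
    (hTp : 0 < T) (hTp' : 0 < T') (hm : 0 < m) (hmq : m < q') (hq : 0 ≤ q) :
    T ≤ |m * α - n| ∧ (m * p = n * q → ∃ x : ℤ, m = x * q) := by
  have hε2 : ε * ε = 1 := by rcases hε with h | h <;> simp [h]
  obtain ⟨x, hx⟩ : ∃ x : ℤ, x = ε * (n * q' - m * p') := ⟨_, rfl⟩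
  obtain ⟨y, hy⟩ : ∃ y : ℤ, y = ε * (m * p - n * q) := ⟨_, rfl⟩
  have h1 : m = x * q + y * q' := by
    have : x * q + y * q' = ε * (q' * p - q * p') * m := by rw [hx, hy]; ring
    rw [this, hdet, hε2, one_mul]
  have h2 : n = x * p + y * p' := by
    have : x * p + y * p' = ε * (q' * p - q * p') * n := by rw [hx, hy]; ring
    rw [this, hdet, hε2, one_mul]
  constructor
  · have h3 : |(m:ℝ) * α - n| = |x * T - y * T'| := by
      have hεr : (ε:ℝ) * ε = 1 := by exact_mod_cast hε2
      have e1 : (x:ℝ) * T - y * T' = -ε * (m * α - n) := by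
        rw [hT, hT', h1, h2]; push_cast; ring
      rw [e1]
      rcases hε with h | h <;> simp [h, abs_sub_comm]
    rw [h3]
    by_cases hy1 : 1 ≤ y
    · have hx1 : x ≤ -1 := by
        by_contra hcon
        have : 0 ≤ x := by omega
        nlinarith [mul_nonneg this hq]
      have hx1' : (x:ℝ) ≤ -1 := by exact_mod_cast hx1
      have hy1' : (1:ℝ) ≤ y := by exact_mod_cast hy1
      rw [abs_sub_comm]
      refine le_trans ?_ (le_abs_self _)
      nlinarith
    · have hy0 : y ≤ 0 := by omega
      have hx1 : 1 ≤ x := by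
        by_contra hcon
        have : x ≤ 0 := by omega
        nlinarith [mul_nonneg (neg_nonneg.2 this) hq]
      have hx1' : (1:ℝ) ≤ x := by exact_mod_cast hx1
      have hy1' : (y:ℝ) ≤ 0 := by exact_mod_cast hy0
      refine le_trans ?_ (le_abs_self _)
      nlinarith
  · intro h
    have : y = 0 := by rw [hy, h]; simp
    exact ⟨x, by rw [this] at h1; simpa using h1⟩

theorem aux_beta (α : ℝ) (hirr : Irrational α) (hα : α ∈ Set.Ioo (0 : ℝ) 1)
    (a : ℕ → ℕ) (β : ℕ → ℝ) (hβ1 : β 1 = α)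
    (hGauss : ∀ k : ℕ, 1 ≤ k → (a k : ℤ) = ⌊1 / β k⌋ ∧ β (k + 1) = 1 / β k - a k) (n : ℕ) :
    Irrational (β (n+1)) ∧ 0 < β (n+1) ∧ β (n+1) < 1 := by
  induction n with
  | zero => rw [zero_add, hβ1]; exact ⟨hirr, hα.1, hα.2⟩
  | succ n ih =>
    obtain ⟨h1, h2⟩ := hGauss (n+1) (by omega)
    have hi : Irrational (β (n+1+1)) := by
      rw [h2, one_div]; exact (ih.1.inv).sub_natCast _
    have e : β (n+1+1) = Int.fract (1 / β (n+1)) := by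
      rw [h2, Int.fract, ← h1]; simp
    refine ⟨hi, ?_, ?_⟩
    · exact lt_of_le_of_ne (e ▸ Int.fract_nonneg _) (Ne.symm hi.ne_zero)
    · rw [e]; exact Int.fract_lt_one _

theorem aux_T (α : ℝ) (a : ℕ → ℕ) (β : ℕ → ℝ) (hβ1 : β 1 = α)
    (hGauss : ∀ k : ℕ, 1 ≤ k → (a k : ℤ) = ⌊1 / β k⌋ ∧ β (k + 1) = 1 / β k - a k)
    (hβ : ∀ n : ℕ, 0 < β (n+1)) (n : ℕ) :
    auxQ a (n+1) * α - auxP a (n+1) = -β (n+1) * (auxQ a n * α - auxP a n) := by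
  induction n with
  | zero => simp [auxQ, auxP, hβ1]
  | succ n ih =>
    have h2 := (hGauss (n+1) (by omega)).2
    have hb := (hβ n).ne'
    rw [h2]
    have : (auxQ a n * α - auxP a n : ℝ) =
        -(1 / β (n+1)) * (auxQ a (n+1) * α - auxP a (n+1)) := by
      rw [ih]; field_simp
    rw [auxQ, auxP]
    push_cast
    linear_combination this

theorem aux_Tpos (α : ℝ) (a : ℕ → ℕ) (β : ℕ → ℝ) (hβ1 : β 1 = α)
    (hGauss : ∀ k : ℕ, 1 ≤ k → (a k : ℤ) = ⌊1 / β k⌋ ∧ β (k + 1) = 1 / β k - a k)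
    (hβ : ∀ n : ℕ, 0 < β (n+1)) (n : ℕ) :
    0 < -(-1:ℝ)^n * (auxQ a n * α - auxP a n) := by
  induction n with
  | zero => simp [auxQ, auxP]
  | succ n ih =>
    rw [aux_T α a β hβ1 hGauss hβ n]
    have := mul_pos (hβ n) ih
    rw [pow_succ]; linarith

set_option maxHeartbeats 1000000 in
theorem aux_dioph_s15
    (α : ℝ) (hirr : Irrational α) (hα : α ∈ Set.Ioo (0 : ℝ) 1)
    (a : ℕ → ℕ) (β : ℕ → ℝ) (hβ1 : β 1 = α)
    (hGauss : ∀ k : ℕ, 1 ≤ k → (a k : ℤ) = ⌊1 / β k⌋ ∧ β (k + 1) = 1 / β k - a k)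
    (q : ℕ → ℕ) (hq1 : q 1 = 1) (hq2 : q 2 = a 1)
    (hqrec : ∀ k : ℕ, 2 ≤ k → q (k + 1) = a k * q k + q (k - 1))
    (s : ℝ) (hs : 1 ≤ s)
    (m : ℕ) (hm : 0 < m)
    (hnot : ∀ k, 1 < k → (q k : ℝ) ^ s < q (k+1) → ∀ j : ℕ, 1 ≤ j → j ≤ a k → m ≠ j * q k)
    (n : ℤ) : 1 ≤ (4 + 2 * q 2) * (m:ℝ) ^ s * |m * α - n| := by
  have hb := aux_beta α hirr hα a β hβ1 hGauss
  have ha : ∀ k, 1 ≤ k → 1 ≤ a k := by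
    intro k hk
    obtain ⟨n, rfl⟩ : ∃ n, k = n + 1 := ⟨k-1, by omega⟩
    have h1 := (hGauss (n+1) hk).1
    have : (1:ℤ) ≤ ⌊1 / β (n+1)⌋ := by
      rw [Int.le_floor, le_div_iff₀ (hb n).2.1]; simpa using (hb n).2.2.le
    rw [← h1] at this; exact_mod_cast this
  have hqmono : ∀ k, 1 ≤ k → 1 ≤ q k ∧ q k ≤ q (k+1) ∧ k ≤ q (k+1) := by
    intro k hk
    induction k, hk using Nat.le_induction with
    | base => simp [hq1, hq2, ha 1 le_rfl]
    | succ k hk ih =>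
      have h := hqrec (k+1) (by omega)
      simp only [Nat.add_sub_cancel] at h
      have := Nat.mul_le_mul_right (q (k+1)) (ha (k+1) (by omega))
      omega
  have hQ : ∀ k, auxQ a (k+1) = q (k+1) ∧ auxQ a (k+2) = q (k+2) := by
    intro k
    induction k with
    | zero => simp [auxQ, hq1, hq2]
    | succ k ih =>
      refine ⟨ih.2, ?_⟩
      have h := hqrec (k+2) (by omega)
      have e : k + 2 - 1 = k + 1 := rfl
      rw [e] at h
      rw [show k + 1 + 2 = k + 2 + 1 from rfl, h, auxQ, ih.2, ih.1]
      push_cast; rfl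
  obtain ⟨k, hk1, hkm, hmk⟩ : ∃ k, 1 ≤ k ∧ q k ≤ m ∧ m < q (k+1) := by
    classical
    have hex : ∃ k, 1 ≤ k ∧ m < q (k+1) := ⟨m+1, by omega, by
      have := (hqmono (m+1) (by omega)).2.2; omega⟩
    refine ⟨Nat.find hex, (Nat.find_spec hex).1, ?_, (Nat.find_spec hex).2⟩
    by_cases h1 : Nat.find hex = 1
    · rw [h1, hq1]; exact hm
    · have h2 := (Nat.find_spec hex).1
      have := Nat.find_min hex (m := Nat.find hex - 1) (by omega)
      rw [Nat.sub_add_cancel h2] at this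
      by_contra hc
      exact this ⟨by omega, by omega⟩
  obtain ⟨i, rfl⟩ : ∃ i, k = i + 1 := ⟨k-1, by omega⟩
  obtain ⟨hQ1, hQ2⟩ := hQ i
  obtain ⟨hqp, hqle, -⟩ := hqmono _ hk1
  have hdet := aux_det a (i+1)
  have hTp := aux_Tpos α a β hβ1 hGauss (fun n => (hb n).2.1) (i+1)
  have hTp' := aux_Tpos α a β hβ1 hGauss (fun n => (hb n).2.1) (i+2)
  have hTT := aux_T α a β hβ1 hGauss (fun n => (hb n).2.1) (i+1)
  have hb1 := (hb (i+1)).2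
  have hdetr : ((auxQ a (i+2) * auxP a (i+1) - auxQ a (i+1) * auxP a (i+2) : ℤ) : ℝ)
    = (-1)^(i+1) := by rw [hdet]; push_cast; rfl
  obtain ⟨ε, hεdef⟩ : ∃ ε : ℤ, ε = (-1)^(i+1) := ⟨_, rfl⟩
  have hε : ε = 1 ∨ ε = -1 := by rw [hεdef]; exact neg_one_pow_eq_or ℤ (i+1)
  have hεr : (-1:ℝ)^(i+1) = ε := by rw [hεdef]; push_cast; rfl
  have hεr2 : (-1:ℝ)^(i+2) = -ε := by rw [pow_succ, hεr]; ring
  have hε2 : (ε:ℝ) * ε = 1 := by rcases hε with h | h <;> simp [h]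
  rw [← hεdef] at hdet
  rw [hεr] at hTp hdetr
  rw [hεr2] at hTp'
  rw [show i + 1 + 1 = i + 2 from rfl] at *
  obtain ⟨T, hT⟩ : ∃ T : ℝ, T = -ε * (auxQ a (i+1) * α - auxP a (i+1)) := ⟨_, rfl⟩
  obtain ⟨T', hT'⟩ : ∃ T : ℝ, T = ε * (auxQ a (i+2) * α - auxP a (i+2)) := ⟨_, rfl⟩
  rw [← hT] at hTp
  rw [neg_neg, ← hT'] at hTp'
  have hTT' : T' = β (i+2) * T := by rw [hT', hT, hTT]; ring
  have hTle : T' ≤ T := by rw [hTT']; nlinarith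
  obtain ⟨hlow, hmul⟩ := aux_lower_s15 α m n _ _ _ _ ε T T' hε hdet hT hT' hTp hTp'
    (by exact_mod_cast hm) (by rw [hQ2]; exact_mod_cast hmk) (by rw [hQ1]; positivity)
  have hsum : (q (i+2) : ℝ) * T + q (i+1) * T' = 1 := by
    have e1 : (auxQ a (i+1) : ℝ) = q (i+1) := by rw [hQ1]; simp
    have e2 : (auxQ a (i+2) : ℝ) = q (i+2) := by rw [hQ2]; simp
    rw [hT, hT', e1, e2]
    push_cast at hdetr
    rw [e1, e2] at hdetr
    linear_combination (ε:ℝ) * hdetr + hε2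
  have hqler : (q (i+1) : ℝ) ≤ q (i+2) := by exact_mod_cast hqle
  have hqpr : (1 : ℝ) ≤ q (i+1) := by exact_mod_cast hqp
  have hkmr : (q (i+1) : ℝ) ≤ m := by exact_mod_cast hkm
  have hmkr : (m : ℝ) < q (i+2) := by exact_mod_cast hmk
  have h2T : 1 ≤ 2 * q (i+2) * T := by nlinarith
  have hT1 : q (i+2) * T ≤ 1 := by nlinarith
  have hm1 : (1:ℝ) ≤ m := by exact_mod_cast hm
  have hms : (m:ℝ) ≤ (m:ℝ)^s := by
    simpa using Real.rpow_le_rpow_of_exponent_le hm1 hs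
  push_cast at hlow
  obtain ⟨X, hX⟩ : ∃ X : ℝ, X = |(m:ℝ) * α - n| := ⟨_, rfl⟩
  rw [← hX] at hlow ⊢
  have hX0 : 0 < X := lt_of_lt_of_le hTp hlow
  have h2X : 1 ≤ 2 * q (i+2) * X := h2T.trans (by gcongr)
  -- reduce to a bound by any of the coefficients
  have key : ∀ Y : ℝ, Y ≤ (4 + 2 * q 2) * (m:ℝ)^s → 1 ≤ Y * X → 1 ≤ (4 + 2 * q 2) * (m:ℝ)^s * X :=
    fun Y h1 h2 => h2.trans (by gcongr)
  have hq20 : (0:ℝ) ≤ q 2 := by positivity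
  by_cases hi : i = 0
  · subst hi
    refine key _ ?_ h2X
    simp only [zero_add]
    nlinarith
  by_cases hE : (q (i+1) : ℝ) ^ s < q (i+2)
  · have hne : (m:ℤ) * auxP a (i+1) ≠ n * auxQ a (i+1) := by
      intro h
      obtain ⟨x, hx⟩ := hmul h
      rw [hQ1] at hx
      have hx0 : 0 < x := by
        by_contra hc
        have : x * (q (i+1) : ℤ) ≤ 0 := mul_nonpos_of_nonpos_of_nonneg (by omega) (by positivity)
        omega
      lift x to ℕ using hx0.le
      have hx' : m = x * q (i+1) := by exact_mod_cast hx
      refine hnot (i+1) (by omega) hE x (by omega) ?_ hx'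
      have hr := hqrec (i+1) (by omega)
      have hle := (hqmono i (by omega)).2.1
      simp only [Nat.add_sub_cancel] at hr
      rw [show i + 1 + 1 = i + 2 from rfl] at hr
      by_contra hc
      have : (a (i+1) + 1) * q (i+1) ≤ x * q (i+1) := Nat.mul_le_mul_right _ (by omega)
      rw [add_mul] at this
      omega
    refine key (4 * m) (by nlinarith) ?_
    by_cases hhalf : (q (i+2) : ℝ) ≤ 2 * m
    · exact h2X.trans (by nlinarith)
    · push Not at hhalf
      have h1 : (1:ℝ) ≤ |((m * auxP a (i+1) - n * auxQ a (i+1) : ℤ) : ℝ)| := by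
        rw [← Int.cast_abs]
        exact_mod_cast Int.one_le_abs (sub_ne_zero.2 hne)
      have hTabs : |(auxQ a (i+1) * α - auxP a (i+1) : ℝ)| = T := by
        rw [← abs_of_pos hTp, hT]
        rcases hε with h | h <;> simp [h, abs_sub_comm]
      have e1 : (auxQ a (i+1) : ℝ) = q (i+1) := by rw [hQ1]; simp
      have e : ((m * auxP a (i+1) - n * auxQ a (i+1) : ℤ) : ℝ)
          = q (i+1) * (m * α - n) - m * (auxQ a (i+1) * α - auxP a (i+1)) := by
        push_cast; rw [e1]; ring
      rw [e] at h1
      have h3 := h1.trans (abs_sub _ _)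
      rw [abs_mul, abs_mul, hTabs, ← hX, Nat.abs_cast, Nat.abs_cast] at h3
      have h4 : (m:ℝ) * T ≤ 1 / 2 := by
        have := mul_le_mul_of_nonneg_right hhalf.le hTp.le
        linarith
      have h5 : (q (i+1) : ℝ) * X ≤ m * X := mul_le_mul_of_nonneg_right hkmr hX0.le
      linarith
  · push Not at hE
    refine key _ ?_ h2X
    have : (q (i+1) : ℝ)^s ≤ (m:ℝ)^s := Real.rpow_le_rpow (by positivity) hkmr (by linarith)
    nlinarith

theorem aux_exp (t : ℝ) : ∃ n : ℤ, 4 * |t - n| ≤ ‖Complex.exp (2 * Real.pi * Complex.I * t) - 1‖ := by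
  refine ⟨round t, ?_⟩
  have e : Complex.exp (2 * Real.pi * Complex.I * t)
      = Complex.exp (Complex.I * ((2 * Real.pi * (t - round t) : ℝ) : ℂ)) := by
    rw [Complex.exp_eq_exp_iff_exists_int]
    refine ⟨round t, ?_⟩
    push_cast; ring
  rw [e, Complex.norm_exp_I_mul_ofReal_sub_one]
  have h := abs_sub_round t
  have hpi := Real.pi_pos
  have e2 : 2 * Real.pi * (t - round t) / 2 = Real.pi * (t - round t) := by ring
  have h2 := Real.mul_abs_le_abs_sin (x := Real.pi * (t - round t)) (by
    rw [abs_mul, abs_of_pos hpi]; nlinarith)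
  rw [e2, norm_mul, Real.norm_eq_abs, Real.norm_eq_abs]
  rw [abs_mul Real.pi, abs_of_pos hpi] at h2
  have : 2 / Real.pi * (Real.pi * |t - round t|) = 2 * |t - round t| := by field_simp
  rw [this] at h2
  norm_num
  linarith

/-- Uniform convergence of the series `∑_{m ∉ M∪{0}} c_m e(mx)/(e(mα)−1)` for coefficients with
polynomial decay, where `M` is the set of multiples `±m·q_k`, `1 ≤ m ≤ a_k`, of the continued
fraction denominators `q_k` of `α` over indices `k` with `q_{k+1} > q_k^{1/τ+3}`.
The continued fraction data `(a_k)`, `(q_k)` of `α` is characterized via the Gauss map. -/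
theorem uniform_convergence_off_resonant_set
    (α : ℝ) (hirr : Irrational α) (hα : α ∈ Set.Ioo (0 : ℝ) 1)
    -- the partial quotients `a_k` of `α`, via the Gauss map
    (a : ℕ → ℕ) (β : ℕ → ℝ) (hβ1 : β 1 = α)
    (hGauss : ∀ k : ℕ, 1 ≤ k → (a k : ℤ) = ⌊1 / β k⌋ ∧ β (k + 1) = 1 / β k - a k)
    -- the denominators `q_k` of the convergents of `α`
    (q : ℕ → ℕ) (hq1 : q 1 = 1) (hq2 : q 2 = a 1)
    (hqrec : ∀ k : ℕ, 2 ≤ k → q (k + 1) = a k * q k + q (k - 1))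
    (τ τ₁ : ℝ) (hτ : 0 < τ) (hτ₁ : τ₁ = 2 / τ + 6)
    (E : Set ℕ) (hE : E = {k : ℕ | 1 < k ∧ ((q k : ℝ)) ^ (1 / τ + 3) < (q (k + 1) : ℝ)})
    (M : Set ℤ) (hM : M = {m : ℤ | ∃ k ∈ E, ∃ j : ℕ, 1 ≤ j ∧ j ≤ a k ∧
      (m = (j * q k : ℕ) ∨ m = -((j * q k : ℕ) : ℤ))})
    (c : ℤ → ℂ) (C : ℝ) (hC : 0 < C)
    (hdecay : ∀ m : ℤ, m ≠ 0 → ‖c m‖ ≤ C * |(m : ℝ)| ^ (-τ₁)) :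
    ∃ ψ : C(AddCircle (1 : ℝ), ℂ),
      HasSum (fun m : {m : ℤ // m ∉ M ∧ m ≠ 0} =>
        (c m / (Complex.exp (2 * Real.pi * Complex.I * (m : ℤ) * α) - 1)) • fourier (m : ℤ))
        ψ := by
  have hs3 : 3 ≤ 1 / τ + 3 := by have : 0 < 1 / τ := by positivity
                                 linarith
  obtain ⟨s, hs⟩ : ∃ s : ℝ, s = 1 / τ + 3 := ⟨_, rfl⟩
  rw [← hs] at hs3
  have hτs : -τ₁ = -s + -s := by rw [hτ₁, hs]; ring
  subst hE
  subst hM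
  rw [← hs]
  refine ⟨_, Summable.hasSum (Summable.of_norm ?_)⟩
  have hsum0 : Summable (fun m : ℤ => C * (4 + 2 * q 2) / 4 * |(m:ℝ)| ^ (-s)) :=
    (Real.summable_abs_int_rpow (by linarith)).mul_left _
  refine Summable.of_nonneg_of_le (fun _ => norm_nonneg _) ?_
    (hsum0.comp_injective Subtype.val_injective)
  rintro ⟨m, hmM, hm0⟩
  rw [norm_smul, fourier_norm, mul_one, norm_div]
  simp only [Function.comp]
  obtain ⟨n, hn⟩ := aux_exp (m * α)
  have hcast : (2 * Real.pi * Complex.I * ((m * α : ℝ) : ℂ)) = 2 * Real.pi * Complex.I * (m : ℤ) * α := by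
    push_cast; ring
  rw [hcast] at hn
  have hnot : ∀ k, 1 < k → (q k : ℝ) ^ s < q (k+1) →
      ∀ j : ℕ, 1 ≤ j → j ≤ a k → m.natAbs ≠ j * q k := by
    intro k hk hkE j hj hja hmj
    refine hmM ⟨k, ⟨hk, hkE⟩, j, hj, hja, ?_⟩
    rw [← hmj]
    omega
  have habs : ((m.natAbs : ℕ) : ℝ) = |(m:ℝ)| := by
    rw [Nat.cast_natAbs, Int.cast_abs]
  have hd : 1 ≤ (4 + 2 * q 2) * |(m:ℝ)| ^ s * |m * α - n| := by
    have H := aux_dioph_s15 α hirr hα a β hβ1 hGauss q hq1 hq2 hqrec s (by linarith) m.natAbs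
      (by omega) hnot
    rw [habs] at H
    rcases abs_choice (m:ℝ) with h | h
    · have := H n
      rwa [h] at this ⊢
    · have := H (-n)
      have e : |-(m:ℝ) * α - ((-n : ℤ) : ℝ)| = |m * α - n| := by
        rw [← abs_neg]; congr 1; push_cast; ring
      rw [h] at this ⊢
      rwa [e] at this
  have hmp : 0 < |(m:ℝ)| := abs_pos.2 (by exact_mod_cast hm0)
  have hc := hdecay m hm0
  rw [hτs, Real.rpow_add hmp] at hc
  have hinv : |(m:ℝ)| ^ (-s) * |(m:ℝ)| ^ s = 1 := by
    rw [← Real.rpow_add hmp]; simp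
  have hup : 0 < |(m:ℝ)| ^ (-s) := Real.rpow_pos_of_pos hmp _
  generalize |(m:ℝ)| ^ (-s) = u at *
  generalize |(m:ℝ)| ^ s = v at *
  generalize |(m:ℝ) * α - n| = X at *
  have hX : u ≤ (4 + 2 * q 2) * X := by
    calc u ≤ u * ((4 + 2 * q 2) * v * X) := le_mul_of_one_le_right hup.le hd
      _ = (u * v) * ((4 + 2 * q 2) * X) := by ring
      _ = _ := by rw [hinv, one_mul]
  have hXp : 0 < X := by
    have : 0 < (4 + 2 * (q 2:ℝ)) * X := lt_of_lt_of_le hup hX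
    exact pos_of_mul_pos_right this (by positivity)
  rw [div_le_iff₀ (by linarith)]
  calc _ ≤ C * (u * u) := hc
    _ ≤ C * (u * ((4 + 2 * q 2) * X)) := by gcongr
    _ = C * (4 + 2 * q 2) / 4 * u * (4 * X) := by ring
    _ ≤ _ := by gcongr
end

section
/- Let α ∈ (0,1) be irrational with continued fraction convergents p_k/q_k and partial quotients a_k, let τ > 0, τ₁ = 2/τ + 6, E = {k ∈ ℕ : k > 1 and q_{k+1} > q_k^{1/τ+3}}, and M = ⋃_{k∈E} {±m q_k : m = 1,…,a_k}, and assume M is infinite. Let (ĥ(m))_{m∈ℤ} be complex numbers with |ĥ(m)| ≤ C|m|^{−τ₁} for all m ≠ 0, set h₁(x) = ∑_{m∈M∪{0}} ĥ(m) e(mx) and H_n(x) = ∑_{i=0}^{n−1} h₁(x+iα). Then there is a constant C′ > 0 such that for every t ∈ E, max_{x∈ℝ/ℤ} |H_{q_t}(x) − q_t ĥ(0)| ≤ C′ q_t^{−(1/τ+2)}. -/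
open MeasureTheory Filter Real


/-- Convergent facts. -/
lemma conv_aux (α : ℝ) (hirr : Irrational α) (hα : α ∈ Set.Ioo (0 : ℝ) 1)
    (a : ℕ → ℕ) (β : ℕ → ℝ) (hβ1 : β 1 = α)
    (hGauss : ∀ k : ℕ, 1 ≤ k → (a k : ℤ) = ⌊1 / β k⌋ ∧ β (k + 1) = 1 / β k - a k)
    (k : ℕ) (hk : 1 ≤ k) : Irrational (β k) ∧ 0 < β k ∧ β k < 1 := by
  induction k, hk using Nat.le_induction with
  | base => rw [hβ1]; exact ⟨hirr, hα.1, hα.2⟩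
  | succ k hk ih =>
    obtain ⟨h1, h2, h3⟩ := ih
    obtain ⟨g1, g2⟩ := hGauss k hk
    have hi : Irrational (β (k+1)) := by
      rw [g2, one_div]
      exact h1.inv.sub_natCast _
    have e : β (k+1) = Int.fract (1 / β k) := by
      rw [g2, Int.fract, ← g1]; simp
    refine ⟨hi, ?_, ?_⟩
    · have : 0 ≤ β (k+1) := e ▸ Int.fract_nonneg _
      exact lt_of_le_of_ne this (fun h => hi.ne_zero h.symm)
    · rw [e]; exact Int.fract_lt_one _

lemma conv_main (α : ℝ) (hirr : Irrational α) (hα : α ∈ Set.Ioo (0 : ℝ) 1)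
    (a : ℕ → ℕ) (β : ℕ → ℝ) (hβ1 : β 1 = α)
    (hGauss : ∀ k : ℕ, 1 ≤ k → (a k : ℤ) = ⌊1 / β k⌋ ∧ β (k + 1) = 1 / β k - a k)
    (q : ℕ → ℕ) (hq1 : q 1 = 1) (hq2 : q 2 = a 1)
    (hqrec : ∀ k : ℕ, 2 ≤ k → q (k + 1) = a k * q k + q (k - 1))
    (n : ℕ) (hn : 1 ≤ n) : 0 < q n ∧ 0 < q (n+1) ∧ ∃ p p' : ℤ,
      (p * q n - p' * q (n+1)) ^ 2 = 1 ∧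
      α * (q (n+1) + q n * β (n+1)) = p + p' * β (n+1) := by
  have hb := conv_aux α hirr hα a β hβ1 hGauss
  have ha : ∀ k, 1 ≤ k → 1 ≤ a k := by
    intro k hk
    obtain ⟨h1, h2, h3⟩ := hb k hk
    have : (1:ℤ) ≤ a k := by
      rw [(hGauss k hk).1, Int.le_floor]
      push_cast
      rw [le_div_iff₀ h2]; linarith
    exact_mod_cast this
  induction n, hn using Nat.le_induction with
  | base =>
    refine ⟨by omega, by have := ha 1 le_rfl; show 0 < q 2; omega, 1, 0, by simp [hq1], ?_⟩
    have := (hGauss 1 le_rfl).2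
    norm_num at this ⊢
    rw [hq1, hq2, this, hβ1]
    have := hα.1.ne'
    field_simp
    ring
  | succ n hn ih =>
    obtain ⟨h0, h1, p, p', hd, he⟩ := ih
    have hr := hqrec (n+1) (by omega)
    simp only [Nat.add_sub_cancel] at hr
    refine ⟨h1, by omega, a (n+1) * p + p', p, ?_, ?_⟩
    · rw [hr, ← hd]; push_cast; ring
    · obtain ⟨_, b0, _⟩ := hb (n+1) (by omega)
      have e := (hGauss (n+1) (by omega)).2
      rw [e, hr]
      push_cast
      have b0' := b0.ne'
      field_simp
      linear_combination he

lemma conv_final (α : ℝ) (hirr : Irrational α) (hα : α ∈ Set.Ioo (0 : ℝ) 1)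
    (a : ℕ → ℕ) (β : ℕ → ℝ) (hβ1 : β 1 = α)
    (hGauss : ∀ k : ℕ, 1 ≤ k → (a k : ℤ) = ⌊1 / β k⌋ ∧ β (k + 1) = 1 / β k - a k)
    (q : ℕ → ℕ) (hq1 : q 1 = 1) (hq2 : q 2 = a 1)
    (hqrec : ∀ k : ℕ, 2 ≤ k → q (k + 1) = a k * q k + q (k - 1))
    (t : ℕ) (ht : 1 < t) : 0 < q t ∧ ∃ p : ℤ,
      IsCoprime p (q t : ℤ) ∧ |q t * α - p| * q (t+1) ≤ 1 := by
  obtain ⟨n, rfl⟩ : ∃ n, t = n + 1 := ⟨t - 1, by omega⟩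
  obtain ⟨h0, h1, p, p', hd, he⟩ :=
    conv_main α hirr hα a β hβ1 hGauss q hq1 hq2 hqrec n (by omega)
  have hr := hqrec (n+1) (by omega)
  simp only [Nat.add_sub_cancel] at hr
  refine ⟨h1, p, ?_, ?_⟩
  · exact ⟨(p * q n - p' * q (n+1)) * q n, -(p * q n - p' * q (n+1)) * p', by
      rw [← hd]; ring⟩
  · obtain ⟨_, b0, _⟩ := conv_aux α hirr hα a β hβ1 hGauss (n+1) (by omega)
    have e := (hGauss (n+1) (by omega)).2
    obtain ⟨_, b0', _⟩ := conv_aux α hirr hα a β hβ1 hGauss (n+1+1) (by omega)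
    have hd' : ((p:ℝ) * q n - p' * q (n+1)) ^ 2 = 1 := by exact_mod_cast hd
    have hle : (q (n+1+1) : ℝ) ≤ q n + q (n+1) * (1 / β (n+1)) := by
      rw [hr]; push_cast
      have : (a (n+1) : ℝ) ≤ 1 / β (n+1) := by linarith
      have h1' : (0:ℝ) ≤ q (n+1) := by positivity
      nlinarith
    have hD : (q (n+1) * α - p) * (1 / β (n+1)) = p' - α * q n := by
      have := b0.ne'
      field_simp
      linear_combination he
    have hone : |(q (n+1) * α - p) * (q n + q (n+1) * (1 / β (n+1)))| = 1 := by
      rw [← sq_eq_sq₀ (abs_nonneg _) zero_le_one, sq_abs, one_pow]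
      have : (q (n+1) * α - p) * (q n + q (n+1) * (1 / β (n+1))) = -(p * q n - p' * q (n+1)) := by
        linear_combination (q (n+1) : ℝ) * hD
      rw [this, neg_sq, hd']
    have hpos : 0 ≤ (q n + q (n+1) * (1 / β (n+1)) : ℝ) := by positivity
    rw [abs_mul, abs_of_nonneg hpos] at hone
    calc _ ≤ |q (n+1) * α - p| * (q n + q (n+1) * (1 / β (n+1))) := by gcongr
      _ = 1 := hone

lemma exp_sub_le (x y : ℝ) : ‖Complex.exp (x * Complex.I) - Complex.exp (y * Complex.I)‖ ≤ |x - y| := by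
  have h : Complex.exp (x * Complex.I) - Complex.exp (y * Complex.I)
      = Complex.exp (y * Complex.I) * (Complex.exp (Complex.I * ((x - y : ℝ) : ℂ)) - 1) := by
    rw [mul_sub, ← Complex.exp_add, mul_one]
    congr 2
    push_cast; ring
  rw [h, norm_mul, Complex.norm_exp_ofReal_mul_I, one_mul]
  simpa using Real.norm_exp_I_mul_ofReal_sub_one_le (x := x - y)

lemma expsum_zero (Q : ℕ) (hQ : 0 < Q) (p m : ℤ) (hp : IsCoprime p (Q : ℤ)) (hm : m ≠ 0)
    (hmQ : |m| < Q) :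
    ∑ i ∈ Finset.range Q, Complex.exp (((2 * π * m * i * (p / Q) : ℝ) : ℂ) * Complex.I) = 0 := by
  set w := Complex.exp (2 * π * Complex.I * (m * p / Q)) with hw
  have hQ' : (Q : ℂ) ≠ 0 := by exact_mod_cast hQ.ne'
  have h1 : ∀ i ∈ Finset.range Q,
      Complex.exp (((2 * π * m * i * (p / Q) : ℝ) : ℂ) * Complex.I) = w ^ i := by
    intro i _
    rw [hw, ← Complex.exp_nat_mul]
    congr 1; push_cast; ring
  rw [Finset.sum_congr rfl h1]
  have hwQ : w ^ Q = 1 := by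
    rw [hw, ← Complex.exp_nat_mul, Complex.exp_eq_one_iff]
    exact ⟨m * p, by push_cast; field_simp⟩
  have hw1 : w ≠ 1 := by
    rw [hw, Ne, Complex.exp_eq_one_iff]
    rintro ⟨n, hn⟩
    have h2 : (2 * π * Complex.I : ℂ) ≠ 0 := Complex.two_pi_I_ne_zero
    rw [mul_comm] at hn
    have h3 := mul_right_cancel₀ h2 hn
    rw [div_eq_iff hQ'] at h3
    have h4 : m * p = n * Q := by exact_mod_cast h3
    have h5 : (Q : ℤ) ∣ m := hp.symm.dvd_of_dvd_mul_right ⟨n, by rw [h4]; ring⟩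
    exact hm (Int.eq_zero_of_abs_lt_dvd h5 hmQ)
  rw [geom_sum_eq hw1, hwQ]; simp

lemma expsum_small (α : ℝ) (Q R : ℕ) (hQ : 0 < Q) (hR : 0 < R) (p m : ℤ) (hp : IsCoprime p (Q : ℤ))
    (hm : m ≠ 0) (hmQ : |m| < Q) (hpR : |Q * α - p| * R ≤ 1) :
    ‖∑ i ∈ Finset.range Q, Complex.exp (((2 * π * m * i * α : ℝ) : ℂ) * Complex.I)‖
      ≤ 2 * π * |(m:ℝ)| * (Q / R) := by
  rw [← sub_zero (∑ i ∈ Finset.range Q, Complex.exp _), ← expsum_zero Q hQ p m hp hm hmQ,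
    ← Finset.sum_sub_distrib]
  have hQ' : (0:ℝ) < Q := by exact_mod_cast hQ
  have hR' : (0:ℝ) < R := by exact_mod_cast hR
  have hpR' : |Q * α - p| ≤ 1 / R := by rwa [le_div_iff₀ hR']
  have key : ∀ i ∈ Finset.range Q, ‖Complex.exp (((2 * π * m * i * α : ℝ) : ℂ) * Complex.I)
      - Complex.exp (((2 * π * m * i * (p / Q) : ℝ) : ℂ) * Complex.I)‖
      ≤ 2 * π * |(m:ℝ)| * (1 / R) := by
    intro i hi
    refine (exp_sub_le _ _).trans ?_
    have hi' : (i:ℝ) ≤ Q := by exact_mod_cast (Finset.mem_range.1 hi).le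
    have e : 2 * π * m * i * α - 2 * π * m * i * (p / Q) = 2 * π * m * ((i / Q) * (Q * α - p)) := by
      field_simp
    rw [e, abs_mul, abs_mul (2 * π), abs_mul ((i:ℝ) / Q), abs_of_pos (by positivity : (0:ℝ) < 2 * π),
      abs_of_nonneg (by positivity : (0:ℝ) ≤ i / Q)]
    gcongr
    have : (i:ℝ) / Q ≤ 1 := by rw [div_le_one hQ']; exact hi'
    calc _ ≤ 1 * |Q * α - p| := by gcongr
      _ ≤ _ := by rw [one_mul]; exact hpR'
  refine (norm_sum_le_of_le _ key).trans (le_of_eq ?_)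
  rw [Finset.sum_const, Finset.card_range, nsmul_eq_mul]
  ring

lemma fourier_shift (m : ℤ) (x : AddCircle (1:ℝ)) (y : ℝ) :
    fourier m (x + (y : AddCircle (1:ℝ))) =
      fourier m x * Complex.exp (((2 * π * m * y : ℝ) : ℂ) * Complex.I) := by
  have : fourier m (x + (y : AddCircle (1:ℝ))) = fourier m x * fourier m (y : AddCircle (1:ℝ)) := by
    simp only [fourier_apply, smul_add, AddCircle.toCircle_add, Circle.coe_mul]
  rw [this, fourier_coe_apply]
  congr 2
  push_cast; simp; ring

lemma fourier_norm1 (m : ℤ) (x : AddCircle (1:ℝ)) : ‖fourier m x‖ = 1 := by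
  rw [fourier_apply]; exact Circle.norm_coe _

lemma term_bound (α : ℝ) (Q R : ℕ) (hQ : 0 < Q) (p m : ℤ) (hp : IsCoprime p (Q : ℤ))
    (hm : m ≠ 0) (hpR : |Q * α - p| * R ≤ 1) (τ τ₁ C : ℝ) (hτ : 0 < τ) (hτ₁ : τ₁ = 2 / τ + 6)
    (hQR : (Q:ℝ) ^ (1 / τ + 3) < R) (hC : 0 < C) (c : ℂ) (hc : ‖c‖ ≤ C * |(m : ℝ)| ^ (-τ₁)) :
    ‖c‖ * ‖∑ i ∈ Finset.range Q, Complex.exp (((2 * π * m * i * α : ℝ) : ℂ) * Complex.I)‖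
      ≤ 2 * π * C * (Q:ℝ) ^ (-(1 / τ + 2)) * (1 / (m:ℝ) ^ 2) := by
  have hQ' : (0:ℝ) < Q := by exact_mod_cast hQ
  have hR' : (0:ℝ) < R := lt_trans (by positivity) hQR
  have hR : 0 < R := by exact_mod_cast hR'
  have hm1 : (1:ℝ) ≤ |(m:ℝ)| := by exact_mod_cast Int.one_le_abs hm
  have hm0 : (0:ℝ) < |(m:ℝ)| := by linarith
  have hτ' : 0 < 1 / τ := by positivity
  have h2τ : 2 / τ = 2 * (1 / τ) := by ring
  have e2 : 1 / (m:ℝ) ^ 2 = |(m:ℝ)| ^ (-2 : ℝ) := by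
    rw [Real.rpow_neg hm0.le, one_div]
    norm_num
  rw [e2]
  rcases lt_or_ge |m| (Q:ℤ) with h | h
  · have hs := expsum_small α Q R hQ hR p m hp hm h hpR
    have hq : (Q:ℝ) / R ≤ (Q:ℝ) ^ (-(1 / τ + 2)) := by
      rw [div_le_iff₀ hR']
      calc (Q:ℝ) = (Q:ℝ) ^ (-(1 / τ + 2)) * (Q:ℝ) ^ (1 / τ + 3) := by
            rw [← Real.rpow_add hQ']; ring_nf; simp
        _ ≤ _ := by gcongr
    calc _ ≤ (C * |(m : ℝ)| ^ (-τ₁)) * (2 * π * |(m:ℝ)| * (Q:ℝ) ^ (-(1 / τ + 2))) := by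
          gcongr
          refine hs.trans ?_
          gcongr
      _ = 2 * π * C * (Q:ℝ) ^ (-(1 / τ + 2)) * (|(m : ℝ)| ^ (-τ₁ + 1)) := by
          rw [Real.rpow_add hm0, Real.rpow_one]; ring
      _ ≤ _ := by
          gcongr
          linarith
  · have hs : ‖∑ i ∈ Finset.range Q, Complex.exp (((2 * π * m * i * α : ℝ) : ℂ) * Complex.I)‖ ≤ Q := by
      refine (norm_sum_le_of_le (f := fun i : ℕ => Complex.exp (((2 * π * m * i * α : ℝ) : ℂ) * Complex.I)) _ (fun i _ => (Complex.norm_exp_ofReal_mul_I _).le)).trans ?_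
      simp
    have hQm : (Q:ℝ) ≤ |(m:ℝ)| := by exact_mod_cast h
    calc _ ≤ (C * |(m : ℝ)| ^ (-τ₁)) * Q := by gcongr
      _ = C * (Q:ℝ) ^ (-(1 / τ + 2)) * (|(m : ℝ)| ^ (-τ₁) * (Q:ℝ) ^ (1 / τ + 3)) := by
          have : (Q:ℝ) = (Q:ℝ) ^ (-(1 / τ + 2)) * (Q:ℝ) ^ (1 / τ + 3) := by
            rw [← Real.rpow_add hQ']; ring_nf; simp
          nth_rewrite 1 [this]; ring
      _ ≤ C * (Q:ℝ) ^ (-(1 / τ + 2)) * (|(m : ℝ)| ^ (-τ₁) * |(m:ℝ)| ^ (1 / τ + 3)) := by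
          gcongr
      _ = 1 * C * (Q:ℝ) ^ (-(1 / τ + 2)) * |(m : ℝ)| ^ (-τ₁ + (1 / τ + 3)) := by
          rw [Real.rpow_add hm0 (-τ₁)]; ring
      _ ≤ _ := by
          gcongr
          · linarith [Real.pi_gt_three]
          · linarith

/-- If the resonant set `M` is infinite, the Birkhoff sums of `h₁(x) = ∑_{m∈M∪{0}} ĥ(m)e(mx)`
at times `q_t`, `t ∈ E`, are almost constant: `max_x |H_{q_t}(x) − q_t ĥ(0)| ≤ C′ q_t^{−(1/τ+2)}`. -/
theorem birkhoff_sums_resonant_part_small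
    (α : ℝ) (hirr : Irrational α) (hα : α ∈ Set.Ioo (0 : ℝ) 1)
    -- the partial quotients `a_k` of `α`, via the Gauss map
    (a : ℕ → ℕ) (β : ℕ → ℝ) (hβ1 : β 1 = α)
    (hGauss : ∀ k : ℕ, 1 ≤ k → (a k : ℤ) = ⌊1 / β k⌋ ∧ β (k + 1) = 1 / β k - a k)
    -- the denominators `q_k` of the convergents of `α`
    (q : ℕ → ℕ) (hq1 : q 1 = 1) (hq2 : q 2 = a 1)
    (hqrec : ∀ k : ℕ, 2 ≤ k → q (k + 1) = a k * q k + q (k - 1))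
    (τ τ₁ : ℝ) (hτ : 0 < τ) (hτ₁ : τ₁ = 2 / τ + 6)
    (E : Set ℕ) (hE : E = {k : ℕ | 1 < k ∧ ((q k : ℝ)) ^ (1 / τ + 3) < (q (k + 1) : ℝ)})
    (M : Set ℤ) (hM : M = {m : ℤ | ∃ k ∈ E, ∃ j : ℕ, 1 ≤ j ∧ j ≤ a k ∧
      (m = (j * q k : ℕ) ∨ m = -((j * q k : ℕ) : ℤ))})
    (hMinf : M.Infinite)
    (hHat : ℤ → ℂ) (C : ℝ) (hC : 0 < C)
    (hdecay : ∀ m : ℤ, m ≠ 0 → ‖hHat m‖ ≤ C * |(m : ℝ)| ^ (-τ₁))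
    -- `h₁(x) = ∑_{m ∈ M∪{0}} ĥ(m) e(mx)`
    (h₁ : AddCircle (1 : ℝ) → ℂ)
    (hh₁ : ∀ x, h₁ x = ∑' m : (M ∪ {0} : Set ℤ), hHat m * fourier (m : ℤ) x)
    -- the Birkhoff sums `H_n(x) = ∑_{i=0}^{n-1} h₁(x + iα)`
    (Hsum : ℕ → AddCircle (1 : ℝ) → ℂ)
    (hHsum : ∀ n x, Hsum n x = ∑ i ∈ Finset.range n, h₁ (x + (((i : ℝ) * α : ℝ) : AddCircle (1 : ℝ)))) :
    ∃ C' : ℝ, 0 < C' ∧ ∀ t ∈ E, ∀ x : AddCircle (1 : ℝ),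
      ‖Hsum (q t) x - (q t : ℂ) * hHat 0‖ ≤ C' * (q t : ℝ) ^ (-(1 / τ + 2)) := by
  classical
  set A : Set ℤ := M ∪ {0} with hA
  set g : ℤ → ℂ := A.indicator hHat with hg
  have hgle : ∀ m, ‖g m‖ ≤ ‖hHat m‖ := fun m => norm_indicator_le_norm_self _ _
  have hg0 : g 0 = hHat 0 := by simp [hg, hA]
  have hsum2 : Summable (fun m : ℤ => 1 / (m:ℝ) ^ 2) :=
    Real.summable_one_div_int_pow.2 (by norm_num)
  have hh : ∀ x, h₁ x = ∑' m : ℤ, g m * fourier m x := by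
    intro x
    rw [hh₁, tsum_subtype A (fun m : ℤ => hHat m * fourier m x)]
    congr 1; ext m
    simp only [hg, Set.indicator_apply]
    split_ifs <;> simp
  have hgs : Summable (fun m : ℤ => ‖g m‖) := by
    have h1 : Summable (fun m : ℤ => C * (1 / (m:ℝ) ^ 2) + if m = 0 then ‖hHat 0‖ else 0) :=
      (hsum2.mul_left C).add (summable_of_ne_finset_zero (s := {0}) (by
        intro b hb; simp at hb; simp [hb]))
    refine h1.of_nonneg_of_le (fun _ => norm_nonneg _) (fun m => ?_)
    by_cases hm : m = 0
    · subst hm; simp [hg0]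
    · simp only [hm, if_false, add_zero]
      refine (hgle m).trans ((hdecay m hm).trans ?_)
      have hm1 : (1:ℝ) ≤ |(m:ℝ)| := by exact_mod_cast Int.one_le_abs hm
      have e2 : 1 / (m:ℝ) ^ 2 = |(m:ℝ)| ^ (-2 : ℝ) := by
        rw [Real.rpow_neg (abs_nonneg _), one_div]
        norm_num
      rw [e2]
      have : 0 < 2 / τ := by positivity
      gcongr
      linarith
  have hfs : ∀ x : AddCircle (1:ℝ), Summable (fun m : ℤ => g m * fourier m x) := by
    intro x
    refine Summable.of_norm ?_
    simpa only [norm_mul, fourier_norm1, mul_one] using hgs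
  refine ⟨2 * π * C * (∑' m : ℤ, 1 / (m:ℝ) ^ 2) + 1, ?_, ?_⟩
  · have : 0 ≤ ∑' m : ℤ, 1 / (m:ℝ) ^ 2 := tsum_nonneg (fun _ => by positivity)
    positivity
  intro t ht x
  rw [hE] at ht
  obtain ⟨ht1, htR⟩ := ht
  obtain ⟨hQ, p, hp, hpR⟩ := conv_final α hirr hα a β hβ1 hGauss q hq1 hq2 hqrec t ht1
  set Q := q t with hQdef
  set S : ℤ → ℂ := fun m => ∑ i ∈ Finset.range Q,
    Complex.exp (((2 * π * m * i * α : ℝ) : ℂ) * Complex.I) with hS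
  have hterm : ∀ m : ℤ, ∑ i ∈ Finset.range Q,
      g m * fourier m (x + (((i : ℝ) * α : ℝ) : AddCircle (1 : ℝ))) = g m * fourier m x * S m := by
    intro m
    rw [hS, Finset.mul_sum]
    refine Finset.sum_congr rfl (fun i _ => ?_)
    rw [fourier_shift, ← mul_assoc]
    congr 4
    ring
  have hHs : HasSum (fun m : ℤ => g m * fourier m x * S m) (Hsum Q x) := by
    rw [hHsum]
    simp_rw [hh, ← hterm]
    exact hasSum_sum (fun i _ => (hfs _).hasSum)
  have hS0 : S 0 = Q := by simp [hS]
  have hdiff : HasSum (fun m : ℤ => g m * fourier m x * S m - if m = 0 then (Q:ℂ) * hHat 0 else 0)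
      (Hsum Q x - (Q:ℂ) * hHat 0) := hHs.sub (hasSum_ite_eq 0 _)
  have hbd : ∀ m : ℤ, ‖g m * fourier m x * S m - if m = 0 then (Q:ℂ) * hHat 0 else 0‖
      ≤ 2 * π * C * (Q:ℝ) ^ (-(1 / τ + 2)) * (1 / (m:ℝ) ^ 2) := by
    intro m
    by_cases hm : m = 0
    · subst hm
      simp [hg0, hS0, mul_comm]
    · simp only [hm, if_false, sub_zero]
      rw [norm_mul, norm_mul, fourier_norm1, mul_one]
      exact term_bound α Q (q (t+1)) hQ p m hp hm hpR τ τ₁ C hτ hτ₁ htR hC (g m)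
        ((hgle m).trans (hdecay m hm))
  rw [← hdiff.tsum_eq]
  refine (tsum_of_norm_bounded (hsum2.hasSum.mul_left _) hbd).trans ?_
  have : (0:ℝ) ≤ (Q:ℝ) ^ (-(1 / τ + 2)) := by positivity
  linarith
end
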